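/- arXiv:2004.14521 — 5 statements merged into one kernel-verified Lean document; each statement's English description precedes it below -/
import Mathlib

section
/- Let (Ω, A, P) be a probability space, d ≥ 1, and let g_n : Ω × ℝ^d → ℝ and h_n : Ω × ℝ^d → ℝ ∪ {∞} be sequences of random criterion functions and C_n a sequence of random symmetric positive definite d×d matrices such that, P-almost surely, g_n(ω,·) is continuously differentiable and h_n(ω,·) is convex and proper. Let θ̂_n be random vectors such that P-almost surely θ̂_n minimizes g_n + h_n over ℝ^d. Assume: (i) for each M > 0 there is a (deterministic) symmetric positive definite matrix H such that sup over θ with √n‖θ − θ̂_n‖ < M of ‖√n(∇g_n(θ) − ∇g_n(θ̂_n)) − √n H (θ − θ̂_n)‖ converges to 0 in probability; (ii) C_n⁻¹ H → I in probability, where I is the d×d identity. Then for any √n-consistent estimator θ̂_init,n of θ̂_n, and any random vectors θ̂_ose,n satisfying P-almost surely θ̂_ose,n ∈ prox_{h_n}^{C_n}(θ̂_init,n − C_n⁻¹ ∇g_n(θ̂_init,n)), the estimators θ̂_ose,n and θ̂_n are asymptotically equivalent, i.e. √n(θ̂_ose,n − θ̂_n) → 0 in probability. -/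
open MeasureTheory Filter Topology ProbabilityTheory

noncomputable section

/-- Apply a `d × d` real matrix to a vector of `EuclideanSpace ℝ (Fin d)`. -/
def mApp {d : ℕ} (C : Matrix (Fin d) (Fin d) ℝ) (v : EuclideanSpace ℝ (Fin d)) :
    EuclideanSpace ℝ (Fin d) :=
  Matrix.toEuclideanLin C v

/-- The squared `C`-norm `‖v‖_C² = vᵀ C v`. -/
def cnormSq {d : ℕ} (C : Matrix (Fin d) (Fin d) ℝ) (v : EuclideanSpace ℝ (Fin d)) : ℝ :=
  inner ℝ v (mApp C v)

/-- The scaled proximal operator (as a set of minimizers):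
`prox_f^C(x) = argmin_w { f(w) + (1/2)‖w − x‖_C² }`. -/
def proxSet {d : ℕ} (f : EuclideanSpace ℝ (Fin d) → EReal) (C : Matrix (Fin d) (Fin d) ℝ)
    (x : EuclideanSpace ℝ (Fin d)) : Set (EuclideanSpace ℝ (Fin d)) :=
  {w | ∀ u, f w + ((cnormSq C (w - x) / 2 : ℝ) : EReal) ≤ f u + ((cnormSq C (u - x) / 2 : ℝ) : EReal)}

/-- A proper extended-real-valued function: not identically `+∞`, never `−∞`. -/
def ProperFn {d : ℕ} (f : EuclideanSpace ℝ (Fin d) → EReal) : Prop :=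
  (∃ x, f x ≠ ⊤) ∧ ∀ x, f x ≠ ⊥

/-- Convexity for extended-real-valued functions. -/
def ConvexFnE {d : ℕ} (f : EuclideanSpace ℝ (Fin d) → EReal) : Prop :=
  ∀ x y : EuclideanSpace ℝ (Fin d), ∀ a b : ℝ, 0 ≤ a → 0 ≤ b → a + b = 1 →
    f (a • x + b • y) ≤ (a : EReal) * f x + (b : EReal) * f y

/-- Operator norm of a matrix acting on Euclidean space. -/
def matNorm {d : ℕ} (C : Matrix (Fin d) (Fin d) ℝ) : ℝ :=
  ‖(Matrix.toEuclideanCLM (𝕜 := ℝ) C : EuclideanSpace ℝ (Fin d) →L[ℝ] EuclideanSpace ℝ (Fin d))‖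

/-- Convergence to zero in probability of a sequence of random vectors. -/
def TendstoInProb {Ω : Type*} [MeasurableSpace Ω] (P : Measure Ω) {E : Type*} [Norm E]
    (Y : ℕ → Ω → E) : Prop :=
  ∀ ε : ℝ, 0 < ε → Tendsto (fun n => P {ω | ε ≤ ‖Y n ω‖}) atTop (𝓝 0)

/-- Boundedness in probability (`O_P(1)`). -/
def BoundedInProb {Ω : Type*} [MeasurableSpace Ω] (P : Measure Ω) {E : Type*} [Norm E]
    (Y : ℕ → Ω → E) : Prop :=
  ∀ ε : ℝ, 0 < ε → ∃ M : ℝ, ∃ N : ℕ, ∀ n ≥ N, P {ω | M < ‖Y n ω‖} ≤ ENNReal.ofReal ε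

/-- `Y_n = O_P(r_n)`. -/
def BigOP {Ω : Type*} [MeasurableSpace Ω] (P : Measure Ω) {E : Type*} [Norm E]
    (Y : ℕ → Ω → E) (r : ℕ → ℝ) : Prop :=
  ∀ ε : ℝ, 0 < ε → ∃ M : ℝ, ∃ N : ℕ, ∀ n ≥ N, P {ω | M * r n < ‖Y n ω‖} ≤ ENNReal.ofReal ε

/-- A sequence of events holds with high probability (probability tending to one). -/
def WithHighProb {Ω : Type*} [MeasurableSpace Ω] (P : Measure Ω) (A : ℕ → Set Ω) : Prop :=
  Tendsto (fun n => P (A n)) atTop (𝓝 1)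

end

/-!
The optimality conditions of `θ̂` and of the proximal step say that `-∇g(θ̂) ∈ ∂h(θ̂)` and
`C (θ_init - θ_ose) - ∇g(θ_init) ∈ ∂h(θ_ose)`. Since `∂h` is monotone, subtracting them gives
`‖θ_ose - θ̂‖_C² ≤ ⟪C (θ_init - θ̂) - (∇g(θ_init) - ∇g(θ̂)), θ_ose - θ̂⟫`.
The left entry of the inner product equals `(C - H) (θ_init - θ̂)` minus the linearization error of
`∇g` at `θ̂`. As `C - H → 0` in probability, `C` is coercive with half the constant of `H` with
probability tending to one, and both terms are negligible at the rate at which `θ_init` approaches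
`θ̂`.
-/

section Subgradient

/-- `s` is a subgradient of the extended-real-valued function `f` at `x`, i.e. `s ∈ ∂f(x)`. The
condition is vacuous where `f x = ⊥`, and forces `f` to be constantly `⊤` where `f x = ⊤`. -/
def IsSubgradientAt {E : Type*} [NormedAddCommGroup E] [InnerProductSpace ℝ E] (f : E → EReal)
    (s x : E) : Prop :=
  ∀ y, f x + (inner ℝ s (y - x) : ℝ) ≤ f y

theorem IsSubgradientAt.inner_sub_sub_nonneg {E : Type*} [NormedAddCommGroup E]
    [InnerProductSpace ℝ E] {f : E → EReal} {s t x y : E} (hs : IsSubgradientAt f s x)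
    (ht : IsSubgradientAt f t y) (hx : f x ≠ ⊤) (hx' : f x ≠ ⊥) (hy : f y ≠ ⊤) (hy' : f y ≠ ⊥) :
    0 ≤ inner ℝ (s - t) (x - y) := by
  have hxy := hs y
  have hyx := ht x
  lift f x to ℝ using ⟨hx, hx'⟩ with a
  lift f y to ℝ using ⟨hy, hy'⟩ with b
  norm_cast at hxy hyx
  rw [← neg_sub x y, inner_neg_right] at hxy
  rw [inner_sub_left]
  linarith

variable {d : ℕ} {f : EuclideanSpace ℝ (Fin d) → ℝ} {h : EuclideanSpace ℝ (Fin d) → EReal}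
  {v w y : EuclideanSpace ℝ (Fin d)}

theorem ProperFn.ne_top_of_forall_add_le (hh : ProperFn h)
    (hw : ∀ u, h w + (f w : EReal) ≤ h u + (f u : EReal)) : h w ≠ ⊤ := by
  obtain ⟨x, hx⟩ := hh.1
  intro hw_top
  have hle := hw x
  rw [hw_top, EReal.top_add_coe, top_le_iff] at hle
  exact EReal.add_ne_top hx (EReal.coe_ne_top _) hle

theorem ConvexFnE.sub_le_inv_mul_sub_of_forall_add_le {a b t : ℝ} (hconv : ConvexFnE h)
    (hw : ∀ u, h w + (f w : EReal) ≤ h u + (f u : EReal)) (ha : h w = a) (hb : h y = b)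
    (ht₀ : 0 < t) (ht₁ : t ≤ 1) : a - b ≤ t⁻¹ * (f (w + t • (y - w)) - f w) := by
  have hsegment : (1 - t) • w + t • y = w + t • (y - w) := by module
  have hconv_t := hconv w y (1 - t) t (by linarith) ht₀.le (by ring)
  have hmin_t := (hw _).trans (add_le_add_left hconv_t _)
  rw [hsegment, ha, hb] at hmin_t
  norm_cast at hmin_t
  rw [inv_mul_eq_div, le_div_iff₀ ht₀]
  linarith

theorem ConvexFnE.isSubgradientAt_neg_of_forall_add_le (hconv : ConvexFnE h) (hh : ProperFn h)
    (hf : HasGradientAt f v w) (hw : ∀ u, h w + (f w : EReal) ≤ h u + (f u : EReal)) :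
    IsSubgradientAt h (-v) w := by
  intro y
  by_cases hy : h y = ⊤
  · exact hy ▸ le_top
  obtain ⟨a, ha⟩ : ∃ a : ℝ, h w = a :=
    ⟨_, (EReal.coe_toReal (hh.ne_top_of_forall_add_le hw) (hh.2 w)).symm⟩
  obtain ⟨b, hb⟩ : ∃ b : ℝ, h y = b := ⟨_, (EReal.coe_toReal hy (hh.2 y)).symm⟩
  have hslope := (hf.hasFDerivAt.hasLineDerivAt (y - w)).tendsto_slope_zero_right
  have hderiv : a - b ≤ inner ℝ v (y - w) := by
    refine ge_of_tendsto hslope ?_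
    filter_upwards [Ioc_mem_nhdsGT one_pos] with t ht
    exact hconv.sub_le_inv_mul_sub_of_forall_add_le hw ha hb ht.1 ht.2
  rw [ha, hb, inner_neg_left]
  norm_cast
  linarith

end Subgradient

section ScaledNorm

open scoped Matrix.Norms.L2Operator

variable {d : ℕ} {C H : Matrix (Fin d) (Fin d) ℝ}

theorem mApp_sub (C : Matrix (Fin d) (Fin d) ℝ) (u v : EuclideanSpace ℝ (Fin d)) :
    mApp C (u - v) = mApp C u - mApp C v :=
  map_sub _ _ _

theorem sub_mApp (C H : Matrix (Fin d) (Fin d) ℝ) (v : EuclideanSpace ℝ (Fin d)) :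
    mApp (C - H) v = mApp C v - mApp H v := by
  simp only [mApp, map_sub, LinearMap.sub_apply]

theorem mApp_mApp_inv (hC : IsUnit C) (v : EuclideanSpace ℝ (Fin d)) :
    mApp C (mApp C⁻¹ v) = v := by
  have hdet : IsUnit C.det := (Matrix.isUnit_iff_isUnit_det C).1 hC
  simp [mApp, Matrix.toLpLin_apply, Matrix.mul_nonsing_inv C hdet]

theorem norm_mApp_le (C : Matrix (Fin d) (Fin d) ℝ) (v : EuclideanSpace ℝ (Fin d)) :
    ‖mApp C v‖ ≤ ‖C‖ * ‖v‖ :=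
  (Matrix.toEuclideanCLM (𝕜 := ℝ) C).le_opNorm v

theorem hasGradientAt_cnormSq_sub_div_two (hC : C.IsHermitian) (x w : EuclideanSpace ℝ (Fin d)) :
    HasGradientAt (fun u => cnormSq C (u - x) / 2) (mApp C (w - x)) w := by
  let T := Matrix.toEuclideanCLM (𝕜 := ℝ) C
  have hT : T.toLinearMap.IsSymmetric := Matrix.isSymmetric_toEuclideanLin_iff.2 hC
  have hquad := ((hT.hasStrictFDerivAt_reApplyInnerSelf (w - x)).hasFDerivAt.comp w
    ((hasFDerivAt_id w).sub_const x)).const_mul (1 / 2)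
  refine hasGradientAt_iff_hasFDerivAt.2
    ((hquad.congr_of_eventuallyEq (.of_forall fun u => ?_)).congr_fderiv ?_)
  · change inner ℝ (u - x) (T (u - x)) / 2 = 1 / 2 * inner ℝ (T (u - x)) (u - x)
    rw [real_inner_comm, div_eq_inv_mul, one_div]
  · ext z
    change 1 / 2 * (2 • inner ℝ (T (w - x)) z) = inner ℝ (T (w - x)) z
    rw [two_nsmul]
    ring

open scoped MatrixOrder in
theorem exists_pos_forall_mul_norm_sq_le_cnormSq (hH : H.PosDef) :
    ∃ l : ℝ, 0 < l ∧ ∀ u, l * ‖u‖ ^ 2 ≤ cnormSq H u := by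
  rcases isEmpty_or_nonempty (Fin d) with _ | _
  · exact ⟨1, one_pos, fun u => by simp [Subsingleton.elim u 0, cnormSq]⟩
  obtain ⟨l, hl, hle⟩ := (CFC.exists_pos_algebraMap_le_iff hH.isHermitian).2
    fun x hx => hH.isStrictlyPositive.spectrum_pos hx
  refine ⟨l, hl, fun u => ?_⟩
  have hnonneg : 0 ≤ cnormSq (H - algebraMap ℝ _ l) u := by
    simpa [cnormSq, mApp, real_inner_comm] using
      (Matrix.isPositive_toEuclideanLin_iff.2 (Matrix.le_iff.1 hle)).inner_nonneg_right u
  have hscalar : mApp (algebraMap ℝ _ l) u = l • u := by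
    simp [mApp, Algebra.algebraMap_eq_smul_one]
  rwa [cnormSq, sub_mApp, hscalar, inner_sub_right, real_inner_smul_right,
    real_inner_self_eq_norm_sq, sub_nonneg] at hnonneg

theorem sub_norm_sub_mul_norm_sq_le_cnormSq {l : ℝ} (u : EuclideanSpace ℝ (Fin d))
    (hu : l * ‖u‖ ^ 2 ≤ cnormSq H u) : (l - ‖C - H‖) * ‖u‖ ^ 2 ≤ cnormSq C u := by
  have hsplit : cnormSq C u = cnormSq H u + inner ℝ u (mApp (C - H) u) := by
    rw [sub_mApp, inner_sub_right, cnormSq, cnormSq]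
    ring
  have hperturb : -(‖C - H‖ * ‖u‖ ^ 2) ≤ inner ℝ u (mApp (C - H) u) :=
    calc -(‖C - H‖ * ‖u‖ ^ 2) = -(‖u‖ * (‖C - H‖ * ‖u‖)) := by ring
      _ ≤ -(‖u‖ * ‖mApp (C - H) u‖) := by gcongr; exact norm_mApp_le _ _
      _ ≤ inner ℝ u (mApp (C - H) u) := neg_le_of_abs_le (abs_real_inner_le_norm _ _)
  linarith

theorem one_sub_mul_norm_sub_le (hC : IsUnit C) :
    (1 - ‖C⁻¹ * H - 1‖) * ‖C - H‖ ≤ ‖C⁻¹ * H - 1‖ * ‖H‖ := by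
  have hfactor : H - C = C * (C⁻¹ * H - 1) := by
    rw [mul_sub, ← mul_assoc, Matrix.mul_nonsing_inv C ((Matrix.isUnit_iff_isUnit_det C).1 hC),
      one_mul, mul_one]
  have hle : ‖C - H‖ ≤ (‖H‖ + ‖C - H‖) * ‖C⁻¹ * H - 1‖ :=
    calc ‖C - H‖ = ‖C * (C⁻¹ * H - 1)‖ := by rw [← hfactor, norm_sub_rev]
      _ ≤ ‖C‖ * ‖C⁻¹ * H - 1‖ := norm_mul_le _ _
      _ ≤ (‖H‖ + ‖C - H‖) * ‖C⁻¹ * H - 1‖ := by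
        gcongr
        exact norm_le_norm_add_norm_sub' C H
  linarith

end ScaledNorm

section ProximalStep

open scoped Matrix.Norms.L2Operator

variable {d : ℕ} {h : EuclideanSpace ℝ (Fin d) → EReal} {C H : Matrix (Fin d) (Fin d) ℝ}

theorem isSubgradientAt_of_mem_proxSet {w x : EuclideanSpace ℝ (Fin d)} (hconv : ConvexFnE h)
    (hh : ProperFn h) (hC : C.IsHermitian) (hw : w ∈ proxSet h C x) :
    IsSubgradientAt h (mApp C (x - w)) w := by
  have hfermat :=
    hconv.isSubgradientAt_neg_of_forall_add_le hh (hasGradientAt_cnormSq_sub_div_two hC x w) hw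
  rwa [mApp_sub, neg_sub, ← mApp_sub] at hfermat

variable {g : EuclideanSpace ℝ (Fin d) → ℝ} {θ θ₀ θ₁ γ γ₀ : EuclideanSpace ℝ (Fin d)}

theorem cnormSq_sub_le_inner_of_mem_proxSet (hconv : ConvexFnE h) (hh : ProperFn h)
    (hC : C.PosDef) (hg : HasGradientAt g γ θ)
    (hmin : ∀ u, (g θ : EReal) + h θ ≤ (g u : EReal) + h u)
    (hprox : θ₁ ∈ proxSet h C (θ₀ - mApp C⁻¹ γ₀)) :
    cnormSq C (θ₁ - θ) ≤ inner ℝ (mApp C (θ₀ - θ) - (γ₀ - γ)) (θ₁ - θ) := by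
  simp only [add_comm _ (h _)] at hmin
  have hsub := hconv.isSubgradientAt_neg_of_forall_add_le hh hg hmin
  have hsub₁ := isSubgradientAt_of_mem_proxSet hconv hh hC.isHermitian hprox
  have hmono := hsub₁.inner_sub_sub_nonneg hsub
    (hh.ne_top_of_forall_add_le (f := fun u => cnormSq C (u - _) / 2) hprox) (hh.2 θ₁)
    (hh.ne_top_of_forall_add_le hmin) (hh.2 θ)
  have hdiff : mApp C (θ₀ - mApp C⁻¹ γ₀ - θ₁) - -γ =
      mApp C (θ₀ - θ) - (γ₀ - γ) - mApp C (θ₁ - θ) := by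
    simp only [mApp_sub, mApp_mApp_inv hC.isUnit]
    abel
  rw [hdiff, inner_sub_left, sub_nonneg] at hmono
  rwa [cnormSq, real_inner_comm]

theorem mul_norm_sub_le_of_mem_proxSet {l : ℝ} (hl : ∀ u, l * ‖u‖ ^ 2 ≤ cnormSq H u)
    (hconv : ConvexFnE h) (hh : ProperFn h) (hC : C.PosDef) (hg : HasGradientAt g γ θ)
    (hmin : ∀ u, (g θ : EReal) + h θ ≤ (g u : EReal) + h u)
    (hprox : θ₁ ∈ proxSet h C (θ₀ - mApp C⁻¹ γ₀)) :
    (l - ‖C - H‖) * ‖θ₁ - θ‖ ≤ ‖C - H‖ * ‖θ₀ - θ‖ + ‖γ₀ - γ - mApp H (θ₀ - θ)‖ := by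
  have hresidual : mApp C (θ₀ - θ) - (γ₀ - γ) =
      mApp (C - H) (θ₀ - θ) - (γ₀ - γ - mApp H (θ₀ - θ)) := by
    rw [sub_mApp]
    abel
  have hsq : (l - ‖C - H‖) * ‖θ₁ - θ‖ * ‖θ₁ - θ‖ ≤
      (‖C - H‖ * ‖θ₀ - θ‖ + ‖γ₀ - γ - mApp H (θ₀ - θ)‖) * ‖θ₁ - θ‖ :=
    calc (l - ‖C - H‖) * ‖θ₁ - θ‖ * ‖θ₁ - θ‖
        = (l - ‖C - H‖) * ‖θ₁ - θ‖ ^ 2 := by ring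
      _ ≤ cnormSq C (θ₁ - θ) := sub_norm_sub_mul_norm_sq_le_cnormSq _ (hl _)
      _ ≤ inner ℝ (mApp C (θ₀ - θ) - (γ₀ - γ)) (θ₁ - θ) :=
        cnormSq_sub_le_inner_of_mem_proxSet hconv hh hC hg hmin hprox
      _ ≤ ‖mApp (C - H) (θ₀ - θ) - (γ₀ - γ - mApp H (θ₀ - θ))‖ * ‖θ₁ - θ‖ :=
        hresidual ▸ real_inner_le_norm _ _
      _ ≤ (‖C - H‖ * ‖θ₀ - θ‖ + ‖γ₀ - γ - mApp H (θ₀ - θ)‖) * ‖θ₁ - θ‖ := by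
        gcongr
        exact (norm_sub_le _ _).trans (by gcongr; exact norm_mApp_le _ _)
  rcases (norm_nonneg (θ₁ - θ)).eq_or_lt with hzero | hpos
  · rw [← hzero, mul_zero]
    positivity
  · exact le_of_mul_le_mul_right hsq hpos

theorem norm_sub_le_two_div_mul_of_mem_proxSet {l : ℝ} (hl₀ : 0 < l)
    (hl : ∀ u, l * ‖u‖ ^ 2 ≤ cnormSq H u) (hCH : ‖C - H‖ ≤ l / 2)
    (hconv : ConvexFnE h) (hh : ProperFn h) (hC : C.PosDef) (hg : HasGradientAt g γ θ)
    (hmin : ∀ u, (g θ : EReal) + h θ ≤ (g u : EReal) + h u)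
    (hprox : θ₁ ∈ proxSet h C (θ₀ - mApp C⁻¹ γ₀)) :
    ‖θ₁ - θ‖ ≤ 2 / l * (‖C - H‖ * ‖θ₀ - θ‖ + ‖γ₀ - γ - mApp H (θ₀ - θ)‖) :=
  calc ‖θ₁ - θ‖ = 2 / l * (l / 2 * ‖θ₁ - θ‖) := by field_simp
    _ ≤ 2 / l * ((l - ‖C - H‖) * ‖θ₁ - θ‖) := by
      gcongr
      linarith
    _ ≤ 2 / l * (‖C - H‖ * ‖θ₀ - θ‖ + ‖γ₀ - γ - mApp H (θ₀ - θ)‖) := by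
      gcongr
      exact mul_norm_sub_le_of_mem_proxSet hl hconv hh hC hg hmin hprox

end ProximalStep

section ConvergenceInProbability

variable {Ω : Type*} [MeasurableSpace Ω] {P : Measure Ω}

theorem TendstoInProb.of_norm_le_mul_of_norm_lt {E F G : Type*} [Norm E] [Norm F] [Norm G]
    {X : ℕ → Ω → E} {Y : ℕ → Ω → F} {Z : ℕ → Ω → G} {c K : ℝ} (hX : TendstoInProb P X)
    (hZ : TendstoInProb P Z) (hc : 0 < c) (hK : 0 < K)
    (hY : ∀ n, ∀ᵐ ω ∂P, ‖Z n ω‖ < c → ‖Y n ω‖ ≤ K * ‖X n ω‖) : TendstoInProb P Y := by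
  intro ε hε
  have hsum := (hZ c hc).add (hX (ε / K) (div_pos hε hK))
  rw [add_zero] at hsum
  refine tendsto_nhds_bot_mono' hsum fun n => (measure_mono_ae ?_).trans (measure_union_le _ _)
  filter_upwards [hY n] with ω hω hεY
  rcases le_or_gt c ‖Z n ω‖ with hcZ | hZc
  · exact Or.inl hcZ
  · exact Or.inr ((div_le_iff₀' hK).2 (hεY.trans (hω hZc)))

theorem TendstoInProb.add {E : Type*} [SeminormedAddCommGroup E] {X Y : ℕ → Ω → E}
    (hX : TendstoInProb P X) (hY : TendstoInProb P Y) :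
    TendstoInProb P fun n ω => X n ω + Y n ω := by
  intro ε hε
  have hsum := (hX (ε / 2) (half_pos hε)).add (hY (ε / 2) (half_pos hε))
  rw [add_zero] at hsum
  refine tendsto_nhds_bot_mono' hsum fun n => (measure_mono fun ω hω => ?_).trans
    (measure_union_le _ _)
  by_contra! hsmall
  simp only [Set.mem_union, Set.mem_ofPred_eq, not_or, not_le] at hω hsmall
  linarith [norm_add_le (X n ω) (Y n ω)]

theorem BoundedInProb.tendstoInProb_of_forall_norm_lt {E F : Type*} [Norm E] [Norm F]
    {W : ℕ → Ω → E} {Y : ℕ → Ω → F} (hW : BoundedInProb P W)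
    (hY : ∀ M : ℝ, 0 < M → ∀ ε : ℝ, 0 < ε →
      Tendsto (fun n => P {ω | ‖W n ω‖ < M ∧ ε ≤ ‖Y n ω‖}) atTop (𝓝 0)) :
    TendstoInProb P Y := by
  intro ε hε
  rw [ENNReal.tendsto_nhds_zero]
  intro δ hδ
  obtain ⟨η, -, hη, hηδ⟩ := ENNReal.lt_iff_exists_real_btwn.1 hδ
  have hη_half : 0 < η / 2 := half_pos (ENNReal.ofReal_pos.1 hη)
  obtain ⟨M, N, hM⟩ := hW (η / 2) hη_half
  have hM' : 0 < max M 0 + 1 := by positivity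
  filter_upwards [eventually_ge_atTop N,
    ENNReal.tendsto_nhds_zero.1 (hY _ hM' ε hε) _ (ENNReal.ofReal_pos.2 hη_half)] with n hn hYn
  have hcover : {ω | ε ≤ ‖Y n ω‖} ⊆
      {ω | M < ‖W n ω‖} ∪ {ω | ‖W n ω‖ < max M 0 + 1 ∧ ε ≤ ‖Y n ω‖} := by
    intro ω hω
    rcases lt_or_ge M ‖W n ω‖ with hlt | hge
    · exact Or.inl hlt
    · exact Or.inr ⟨by linarith [le_max_left M 0], hω⟩
  calc P {ω | ε ≤ ‖Y n ω‖}
      ≤ P {ω | M < ‖W n ω‖} + P {ω | ‖W n ω‖ < max M 0 + 1 ∧ ε ≤ ‖Y n ω‖} :=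
        (measure_mono hcover).trans (measure_union_le _ _)
    _ ≤ ENNReal.ofReal (η / 2) + ENNReal.ofReal (η / 2) := add_le_add (hM n hn) hYn
    _ = ENNReal.ofReal η := by rw [← ENNReal.ofReal_add hη_half.le hη_half.le, add_halves]
    _ ≤ δ := hηδ.le

theorem BoundedInProb.tendstoInProb_comp_of_uniform {S E F : Type*} [Norm E] [Norm F]
    {ψ : ℕ → Ω → S → E} {φ : ℕ → Ω → S → F} {ξ : ℕ → Ω → S}
    (hξ : BoundedInProb P fun n ω => ψ n ω (ξ n ω))
    (hφ : ∀ M : ℝ, 0 < M → ∀ ε : ℝ, 0 < ε →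
      Tendsto (fun n => P {ω | ∃ x, ‖ψ n ω x‖ < M ∧ ε ≤ ‖φ n ω x‖}) atTop (𝓝 0)) :
    TendstoInProb P fun n ω => φ n ω (ξ n ω) :=
  hξ.tendstoInProb_of_forall_norm_lt fun M hM ε hε =>
    tendsto_nhds_bot_mono' (hφ M hM ε hε) fun n => measure_mono fun ω hω => ⟨ξ n ω, hω⟩

theorem TendstoInProb.norm_mul_norm {E F : Type*} [SeminormedAddCommGroup E]
    [SeminormedAddCommGroup F] {Z : ℕ → Ω → E} {W : ℕ → Ω → F} (hZ : TendstoInProb P Z)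
    (hW : BoundedInProb P W) :
    TendstoInProb P fun n ω => ‖Z n ω‖ * ‖W n ω‖ := by
  refine hW.tendstoInProb_of_forall_norm_lt fun M hM ε hε =>
    tendsto_nhds_bot_mono' (hZ (ε / M) (div_pos hε hM)) fun n => measure_mono ?_
  rintro ω ⟨hWM, hεZW⟩
  rw [Set.mem_ofPred_eq, div_le_iff₀ hM]
  calc ε ≤ ‖Z n ω‖ * ‖W n ω‖ := by rwa [norm_mul, norm_norm, norm_norm] at hεZW
    _ ≤ ‖Z n ω‖ * M := by gcongr

end ConvergenceInProbability

section OneStep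

open scoped Matrix.Norms.L2Operator

variable {d : ℕ} {Ω : Type*} [MeasurableSpace Ω]

theorem tendstoInProb_sub_of_inv_mul_sub_one {P : Measure Ω}
    {C : ℕ → Ω → Matrix (Fin d) (Fin d) ℝ} {H : Matrix (Fin d) (Fin d) ℝ}
    (hC : ∀ n, ∀ᵐ ω ∂P, IsUnit (C n ω))
    (hCH : TendstoInProb P fun n ω => (C n ω)⁻¹ * H - 1) :
    TendstoInProb P fun n ω => C n ω - H := by
  refine hCH.of_norm_le_mul_of_norm_lt hCH (c := 1 / 2) (K := 2 * ‖H‖ + 1) (by norm_num)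
    (by positivity) fun n => ?_
  filter_upwards [hC n] with ω hω hsmall
  have hbound := one_sub_mul_norm_sub_le (H := H) hω
  nlinarith [norm_nonneg ((C n ω)⁻¹ * H - 1), norm_nonneg (C n ω - H)]

theorem one_step_scaled_proximal_gradient_general (P : Measure Ω)
    (g : ℕ → Ω → EuclideanSpace ℝ (Fin d) → ℝ)
    (dg : ℕ → Ω → EuclideanSpace ℝ (Fin d) → EuclideanSpace ℝ (Fin d))
    (h : ℕ → Ω → EuclideanSpace ℝ (Fin d) → EReal)
    (C : ℕ → Ω → Matrix (Fin d) (Fin d) ℝ)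
    (θhat θinit θose : ℕ → Ω → EuclideanSpace ℝ (Fin d)) (r : ℕ → ℝ) (hr : ∀ n, 0 ≤ r n)
    (hg : ∀ n, ∀ᵐ ω ∂P, ∀ θ, HasGradientAt (g n ω) (dg n ω θ) θ)
    (hh : ∀ n, ∀ᵐ ω ∂P, ConvexFnE (h n ω) ∧ ProperFn (h n ω))
    (hC : ∀ n, ∀ᵐ ω ∂P, (C n ω).PosDef)
    (hmin : ∀ n, ∀ᵐ ω ∂P, ∀ θ,
      (g n ω (θhat n ω) : EReal) + h n ω (θhat n ω) ≤ (g n ω θ : EReal) + h n ω θ)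
    (H : Matrix (Fin d) (Fin d) ℝ) (hH : H.PosDef)
    (hi : ∀ M : ℝ, 0 < M → ∀ ε : ℝ, 0 < ε →
      Tendsto (fun n => P {ω | ∃ θ, r n * ‖θ - θhat n ω‖ < M ∧
        ε ≤ r n * ‖(dg n ω θ - dg n ω (θhat n ω)) - mApp H (θ - θhat n ω)‖}) atTop (𝓝 0))
    (hii : ∀ ε : ℝ, 0 < ε →
      Tendsto (fun n => P {ω | ε ≤ matNorm ((C n ω)⁻¹ * H - 1)}) atTop (𝓝 0))
    (hinit : BoundedInProb P fun n ω => r n • (θinit n ω - θhat n ω))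
    (hose : ∀ n, ∀ᵐ ω ∂P,
      θose n ω ∈ proxSet (h n ω) (C n ω) (θinit n ω - mApp (C n ω)⁻¹ (dg n ω (θinit n ω)))) :
    TendstoInProb P fun n ω => r n • (θose n ω - θhat n ω) := by
  obtain ⟨l, hl, hcoercive⟩ := exists_pos_forall_mul_norm_sq_le_cnormSq hH
  have hCH : TendstoInProb P fun n ω => C n ω - H :=
    tendstoInProb_sub_of_inv_mul_sub_one (fun n => (hC n).mono fun _ hω => hω.isUnit) hii
  have hlin : TendstoInProb P fun n ω => r n * ‖dg n ω (θinit n ω) - dg n ω (θhat n ω) -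
      mApp H (θinit n ω - θhat n ω)‖ :=
    hinit.tendstoInProb_comp_of_uniform (ψ := fun n ω θ => r n • (θ - θhat n ω))
      (φ := fun n ω θ => r n * ‖dg n ω θ - dg n ω (θhat n ω) - mApp H (θ - θhat n ω)‖)
      (by simpa only [norm_smul, norm_mul, norm_norm, Real.norm_of_nonneg (hr _)] using hi)
  refine ((hCH.norm_mul_norm hinit).add hlin).of_norm_le_mul_of_norm_lt hCH (half_pos hl)
    (K := 2 / l) (by positivity) fun n => ?_
  filter_upwards [hg n, hh n, hC n, hmin n, hose n] with ω hgω hhω hCω hminω hoseω hsmall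
  have hstep := mul_le_mul_of_nonneg_left (norm_sub_le_two_div_mul_of_mem_proxSet hl hcoercive
    hsmall.le hhω.1 hhω.2 hCω (hgω _) hminω hoseω) (hr n)
  rw [norm_smul, norm_smul, Real.norm_of_nonneg (hr n), mul_left_comm ‖_‖, ← mul_add]
  grw [hstep, ← Real.le_norm_self, mul_left_comm]

end OneStep

open MeasureTheory Filter Topology in
/-- Theorem 2.1 (one-step estimation for scaled proximal gradient descent on a composite model):
under assumptions (i) and (ii), the one-step estimator obtained from a single scaled proximal
gradient step started at any `√n`-consistent initial estimator is asymptotically equivalent to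
the minimizer of the composite model. -/
theorem one_step_scaled_proximal_gradient
    (d : ℕ) (hd : 1 ≤ d)
    {Ω : Type*} [MeasurableSpace Ω] (P : MeasureTheory.Measure Ω) [IsProbabilityMeasure P]
    (g : ℕ → Ω → EuclideanSpace ℝ (Fin d) → ℝ)
    (dg : ℕ → Ω → EuclideanSpace ℝ (Fin d) → EuclideanSpace ℝ (Fin d))
    (h : ℕ → Ω → EuclideanSpace ℝ (Fin d) → EReal)
    (C : ℕ → Ω → Matrix (Fin d) (Fin d) ℝ)
    (θhat θinit θose : ℕ → Ω → EuclideanSpace ℝ (Fin d))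
    -- P-a.s., gₙ is continuously differentiable with gradient dgₙ
    (hg : ∀ n, ∀ᵐ ω ∂P, (∀ θ, HasGradientAt (g n ω) (dg n ω θ) θ) ∧ Continuous (dg n ω))
    -- P-a.s., hₙ is convex and proper
    (hh : ∀ n, ∀ᵐ ω ∂P, ConvexFnE (h n ω) ∧ ProperFn (h n ω))
    -- the scaling matrices are symmetric positive definite
    (hC : ∀ n, ∀ᵐ ω ∂P, (C n ω).PosDef)
    -- P-a.s., θ̂ₙ minimizes gₙ + hₙ over ℝ^d
    (hmin : ∀ n, ∀ᵐ ω ∂P, ∀ θ,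
      ((g n ω (θhat n ω) : EReal) + h n ω (θhat n ω)) ≤ (g n ω θ : EReal) + h n ω θ)
    -- assumption (i): uniform stochastic differentiability with positive definite H
    (H : Matrix (Fin d) (Fin d) ℝ) (hH : H.PosDef)
    (hi : ∀ M : ℝ, 0 < M → ∀ ε : ℝ, 0 < ε →
      Tendsto (fun n : ℕ => P {ω | ∃ θ, Real.sqrt n * ‖θ - θhat n ω‖ < M ∧
        ε ≤ Real.sqrt n * ‖(dg n ω θ - dg n ω (θhat n ω)) - mApp H (θ - θhat n ω)‖})
        atTop (𝓝 0))
    -- assumption (ii): Cₙ⁻¹ H → I in probability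
    (hii : ∀ ε : ℝ, 0 < ε →
      Tendsto (fun n => P {ω | ε ≤ matNorm ((C n ω)⁻¹ * H - 1)}) atTop (𝓝 0))
    -- θ̂_init is a √n-consistent estimator of θ̂
    (hinit : BoundedInProb P (fun n ω => Real.sqrt n • (θinit n ω - θhat n ω)))
    -- the one-step estimator: a single scaled proximal gradient step from θ̂_init
    (hose : ∀ n, ∀ᵐ ω ∂P,
      θose n ω ∈ proxSet (h n ω) (C n ω)
        (θinit n ω - mApp (C n ω)⁻¹ (dg n ω (θinit n ω)))) :
    -- conclusion: asymptotic equivalence of θ̂_ose and θ̂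
    TendstoInProb P (fun n ω => Real.sqrt n • (θose n ω - θhat n ω)) :=
  one_step_scaled_proximal_gradient_general P g dg h C θhat θinit θose (fun n => Real.sqrt n)
    (fun n => Real.sqrt_nonneg n) (fun n => (hg n).mono fun _ hω => hω.1) hh hC hmin H hH hi hii
    hinit hose
end

section
/- Let {p_θ : θ ∈ Θ}, Θ ⊆ ℝ^d open, be a family of probability densities with respect to a σ-finite measure μ, let θ* ∈ Θ, and let X_1, ..., X_n be iid with density p_{θ*}. Let g_n(θ) = −(1/n) Σ_{i=1}^n log p_θ(X_i), let h_n be random convex proper functions, let C_n be random positive definite matrices, and let θ̂_n minimize g_n + h_n almost surely. Assume θ̂_n is √n-consistent for some fixed θ₀ ∈ Θ, and: (i) θ ↦ log p_θ(x) is three times differentiable for every x; (ii) E[∇²log p_{θ₀}(X_1)] exists and is negative definite; (iii) the third-order partial derivatives of log p_θ(x) are dominated by a fixed μ-integrable function for every θ in a neighborhood of θ₀; (iv) −C_n⁻¹ E[∇² log p_{θ₀}(X_1)] → I in probability. Then for any √n-consistent estimator θ̂_init,n of θ̂_n, the one-step estimator θ̂_ose,n ∈ prox_{h_n}^{C_n}(θ̂_init,n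 − C_n⁻¹ ∇g_n(θ̂_init,n)) is asymptotically equivalent to θ̂_n, i.e. √n(θ̂_ose,n − θ̂_n) → 0 in probability. -/
open MeasureTheory Filter Topology ProbabilityTheory

/-- View a plain vector as an element of Euclidean space. -/
def toEuc {d : ℕ} (v : Fin d → ℝ) : EuclideanSpace ℝ (Fin d) := WithLp.toLp 2 v

/-!
Let `g` be the negative mean log-likelihood. The prox step `θose` minimizes `h` plus a quadratic and
`θhat` minimizes `h + g`, so monotonicity of the subdifferential of the convex function `h` gives,
for `Δ = θose - θhat` and `v = θinit - θhat`,
`⟪C Δ, Δ⟫ ≤ ⟪C v - (∇g(θinit) - ∇g(θhat)), Δ⟫`.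
By Taylor expansion and the law of large numbers `∇g(θinit) - ∇g(θhat) = -Hm v + o_P(‖v‖)`, and
`C → -Hm` in probability. Hence the first argument on the right is `o_P(‖v‖)`, while `-Hm` is
coercive, so `Δ = o_P(‖v‖) = o_P(n^(-1/2))`.
-/

open Asymptotics InnerProductSpace Gradient

-- `mApp C v` unfolds to `toCLM C v`.
local notation "toCLM" => Matrix.toEuclideanCLM (𝕜 := ℝ)

section HighProb

variable {Ω : Type*} [MeasurableSpace Ω] {P : Measure Ω}

/-- The filter on `ℕ × Ω` of the events `(Aₙ)ₙ` with `P(Aₙᶜ) → 0`. Convergence in probability is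
convergence along this filter, so that limits and Landau symbols in probability are instances of the
ones for filters. The complement is measured by the outer measure `P`, hence `Aₙ` need not be
measurable. -/
def highProb (P : Measure Ω) : Filter (ℕ × Ω) where
  sets := {S | Tendsto (fun n => P {ω | (n, ω) ∉ S}) atTop (𝓝 0)}
  univ_sets := by simp
  sets_of_superset hS hST :=
    tendsto_of_tendsto_of_tendsto_of_le_of_le tendsto_const_nhds hS (fun _ => zero_le)
      fun _ => measure_mono fun _ hω hωS => hω (hST hωS)
  inter_sets {S T} hS hT := by
    have hsum : Tendsto (fun n => P {ω | (n, ω) ∉ S} + P {ω | (n, ω) ∉ T}) atTop (𝓝 0) := by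
      simpa using hS.add hT
    refine tendsto_of_tendsto_of_tendsto_of_le_of_le tendsto_const_nhds hsum (fun _ => zero_le)
      fun n => (measure_mono fun ω hω => ?_).trans (measure_union_le _ _)
    exact not_and_or.mp hω

theorem eventually_highProb_iff {p : ℕ × Ω → Prop} :
    (∀ᶠ z in highProb P, p z) ↔ Tendsto (fun n => P {ω | ¬ p (n, ω)}) atTop (𝓝 0) :=
  Iff.rfl

theorem eventually_highProb_of_ae {p : ℕ → Ω → Prop}
    (h : ∀ᶠ n in atTop, ∀ᵐ ω ∂P, p n ω) : ∀ᶠ z in highProb P, p z.1 z.2 :=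
  eventually_highProb_iff.mpr <|
    tendsto_const_nhds.congr' <| h.mono fun _ hn => (ae_iff.mp hn).symm

theorem tendsto_fst_highProb : Tendsto Prod.fst (highProb P) atTop := fun _ hs =>
  eventually_highProb_of_ae <| (eventually_mem_set.mpr hs).mono fun _ hn => ae_of_all _ fun _ => hn

theorem tendsto_highProb_nhds_iff {E : Type*} [PseudoEMetricSpace E] {Y : ℕ → Ω → E} {y : E} :
    Tendsto (fun z => Y z.1 z.2) (highProb P) (𝓝 y) ↔
      TendstoInMeasure P Y atTop fun _ => y := by
  simp only [EMetric.tendsto_nhds, eventually_highProb_iff, not_lt]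
  rfl

theorem TendstoInProb.tendsto_highProb {E : Type*} [SeminormedAddCommGroup E] {Y : ℕ → Ω → E}
    (hY : TendstoInProb P Y) : Tendsto (fun z => Y z.1 z.2) (highProb P) (𝓝 0) := by
  rw [tendsto_highProb_nhds_iff, tendstoInMeasure_iff_norm]
  simpa only [sub_zero] using fun ε hε => hY ε hε

namespace BoundedInProb

theorem exists_eventually_measure_le {E : Type*} [Norm E] {Y : ℕ → Ω → E}
    (hY : BoundedInProb P Y) {η : ENNReal} (hη : 0 < η) :
    ∃ M : ℝ, 0 < M ∧ ∀ᶠ n in atTop, P {ω | M < ‖Y n ω‖} ≤ η := by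
  obtain ⟨ε, hε, hεη⟩ : ∃ ε : ℝ, 0 < ε ∧ ENNReal.ofReal ε ≤ η := by
    obtain rfl | hη_top := eq_or_ne η ⊤
    · exact ⟨1, one_pos, le_top⟩
    · exact ⟨η.toReal, ENNReal.toReal_pos hη.ne' hη_top, ENNReal.ofReal_toReal_le⟩
  obtain ⟨M, N, hM⟩ := hY ε hε
  refine ⟨max M 1, by positivity, (eventually_ge_atTop N).mono fun n hn => ?_⟩
  refine (measure_mono fun ω hω => ?_).trans ((hM n hn).trans hεη)
  exact (le_max_left M 1).trans_lt hω

variable {E F : Type*} [SeminormedAddCommGroup E] [SeminormedAddCommGroup F] {Y : ℕ → Ω → E}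

theorem tendstoInProb_of_isLittleO {Z : ℕ → Ω → F} (hY : BoundedInProb P Y)
    (hZY : (fun z => Z z.1 z.2) =o[highProb P] fun z => Y z.1 z.2) : TendstoInProb P Z := by
  refine fun ε hε => ENNReal.tendsto_nhds_zero.mpr fun η hη => ?_
  obtain ⟨M, hM, hYM⟩ := hY.exists_eventually_measure_le (ENNReal.half_pos hη.ne')
  have hratio : ∀ᶠ z in highProb P, ‖Z z.1 z.2‖ ≤ ε / (2 * M) * ‖Y z.1 z.2‖ :=
    hZY.def (by positivity)
  filter_upwards [hYM, ENNReal.tendsto_nhds_zero.mp (eventually_highProb_iff.mp hratio) _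
    (ENNReal.half_pos hη.ne')] with n hYn hZn
  calc P {ω | ε ≤ ‖Z n ω‖}
      ≤ P ({ω | M < ‖Y n ω‖} ∪ {ω | ¬ ‖Z n ω‖ ≤ ε / (2 * M) * ‖Y n ω‖}) := by
        refine measure_mono fun ω (hω : ε ≤ ‖Z n ω‖) => ?_
        by_contra! hgood
        obtain ⟨hYω, hZω⟩ : ‖Y n ω‖ ≤ M ∧ ‖Z n ω‖ ≤ ε / (2 * M) * ‖Y n ω‖ := by
          simpa using hgood
        have : ε ≤ ε / 2 := calc
          ε ≤ ε / (2 * M) * ‖Y n ω‖ := hω.trans hZω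
          _ ≤ ε / (2 * M) * M := by gcongr
          _ = ε / 2 := by field_simp
        linarith
    _ ≤ η / 2 + η / 2 := (measure_union_le _ _).trans (add_le_add hYn hZn)
    _ = η := ENNReal.add_halves η

theorem tendstoInProb_of_smul [NormedSpace ℝ E] {a : ℕ → ℝ} (ha : Tendsto a atTop atTop)
    (hY : BoundedInProb P fun n ω => a n • Y n ω) : TendstoInProb P Y := by
  have hone : (fun _ => (1 : ℝ)) =o[highProb P] fun z => a z.1 :=
    (isLittleO_one_left_iff ℝ).mpr
      (tendsto_norm_atTop_atTop.comp (ha.comp tendsto_fst_highProb))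
  refine hY.tendstoInProb_of_isLittleO ?_
  simpa only [one_smul] using hone.smul_isBigO (isBigO_refl (fun z => Y z.1 z.2) _)

end BoundedInProb

end HighProb

section SampleMean

variable {𝒳 Ω V : Type*} [NormedAddCommGroup V] [NormedSpace ℝ V]

/-- The mean of the first `n` terms of a sequence; it is `0` for `n = 0`. -/
noncomputable def sampleMean (u : ℕ → V) (n : ℕ) : V := (n : ℝ)⁻¹ • ∑ i ∈ Finset.range n, u i

theorem norm_sampleMean_le {u : ℕ → V} {k : ℕ → ℝ} (h : ∀ i, ‖u i‖ ≤ k i) (n : ℕ) :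
    ‖sampleMean u n‖ ≤ sampleMean k n := by
  rw [sampleMean, norm_smul, norm_inv, RCLike.norm_natCast]
  exact mul_le_mul_of_nonneg_left (norm_sum_le_of_le _ fun i _ => h i) (by positivity)

theorem sampleMean_sub (u v : ℕ → V) (n : ℕ) :
    sampleMean (fun i => u i - v i) n = sampleMean u n - sampleMean v n := by
  simp only [sampleMean, Finset.sum_sub_distrib, smul_sub]

theorem sampleMean_mul_const (u : ℕ → ℝ) (c : ℝ) (n : ℕ) :
    sampleMean (fun i => u i * c) n = sampleMean u n * c := by
  simp only [sampleMean, ← Finset.sum_mul, smul_mul_assoc]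

theorem sampleMean_clm_apply {W : Type*} [NormedAddCommGroup W] [NormedSpace ℝ W]
    (A : ℕ → V →L[ℝ] W) (v : V) (n : ℕ) :
    sampleMean (fun i => A i v) n = sampleMean A n v := by
  simp only [sampleMean, smul_apply, FunLike.coe_sum, Finset.sum_apply]

variable [MeasurableSpace 𝒳] [MeasurableSpace Ω] {P : Measure Ω} {ν : Measure 𝒳}
  {X : ℕ → Ω → 𝒳}

theorem tendsto_sampleMean_highProb [CompleteSpace V] [MeasurableSpace V] [BorelSpace V]
    [IsFiniteMeasure P] (hX : ∀ i, AEMeasurable (X i) P)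
    (hindep : Pairwise fun i j => IndepFun (X i) (X j) P) (hlaw : ∀ i, P.map (X i) = ν)
    {φ : 𝒳 → V} (hφ : Integrable φ ν) :
    Tendsto (fun z : ℕ × Ω => sampleMean (fun i => φ (X i z.2)) z.1) (highProb P)
      (𝓝 (∫ x, φ x ∂ν)) := by
  have hφX : ∀ i, AEStronglyMeasurable φ (P.map (X i)) := fun i =>
    (hlaw i).symm ▸ hφ.aestronglyMeasurable
  have hint : ∀ i, Integrable (φ ∘ X i) P := fun i =>
    (integrable_map_measure (hφX i) (hX i)).mp ((hlaw i).symm ▸ hφ)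
  have hmean : P[φ ∘ X 0] = ∫ x, φ x ∂ν := by
    rw [← hlaw 0, integral_map (hX 0) (hφX 0)]
    rfl
  have hident : ∀ i, IdentDistrib (φ ∘ X i) (φ ∘ X 0) P P := fun i =>
    IdentDistrib.comp_of_aemeasurable ⟨hX i, hX 0, (hlaw i).trans (hlaw 0).symm⟩
      (hφX i).aemeasurable
  have hlln := strong_law_ae (fun i => φ ∘ X i) (hint 0)
    (fun i j hij => (hindep hij).comp₀ (hX i) (hX j) (hφX i).aemeasurable (hφX j).aemeasurable)
    hident
  rw [hmean] at hlln
  refine (tendsto_highProb_nhds_iff (Y := fun n ω => sampleMean (fun i => φ (X i ω)) n)).mpr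
    (tendstoInMeasure_of_tendsto_ae (fun n => ?_) hlln)
  exact (Finset.aestronglyMeasurable_fun_sum _ fun i _ =>
    (hint i).aestronglyMeasurable).const_smul _

theorem tendsto_sampleMean_toCLM_highProb {d : ℕ} [IsFiniteMeasure P]
    (hX : ∀ i, AEMeasurable (X i) P)
    (hindep : Pairwise fun i j => IndepFun (X i) (X j) P) (hlaw : ∀ i, P.map (X i) = ν)
    {A : 𝒳 → Matrix (Fin d) (Fin d) ℝ} (hA : ∀ i j, Integrable (fun x => A x i j) ν) :
    Tendsto (fun z : ℕ × Ω => sampleMean (fun i => toCLM (A (X i z.2))) z.1) (highProb P)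
      (𝓝 (toCLM (Matrix.of fun i j => ∫ x, A x i j ∂ν))) := by
  have hentries : Tendsto
      (fun z : ℕ × Ω => Matrix.of fun i j => sampleMean (fun k => A (X k z.2) i j) z.1)
      (highProb P) (𝓝 (Matrix.of fun i j => ∫ x, A x i j ∂ν)) :=
    tendsto_pi_nhds.mpr fun i => tendsto_pi_nhds.mpr fun j =>
      tendsto_sampleMean_highProb (φ := fun x => A x i j) hX hindep hlaw (hA i j)
  have hcont : Continuous fun M : Matrix (Fin d) (Fin d) ℝ => toCLM M :=
    (Matrix.toEuclideanCLM (n := Fin d) (𝕜 := ℝ)).toAlgEquiv.toLinearMap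
      |>.continuous_of_finiteDimensional
  refine ((hcont.tendsto _).comp hentries).congr fun z => ?_
  simp only [Function.comp_apply, sampleMean, ← map_sum, ← map_smul]
  congr 1
  ext i j
  simp [Matrix.sum_apply]

end SampleMean

section NormedAnalysis

variable {α E F : Type*} {l : Filter α} [NormedAddCommGroup E] [NormedAddCommGroup F]

theorem isLittleO_of_norm_le_mul {f : α → F} {g : α → E} {ρ : α → ℝ} (hρ : Tendsto ρ l (𝓝 0))
    (h : ∀ᶠ z in l, ‖f z‖ ≤ ρ z * ‖g z‖) : f =o[l] g := by
  refine isLittleO_iff.mpr fun c hc => ?_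
  filter_upwards [h, hρ.eventually_le_const hc] with z hz hρz
  exact hz.trans (mul_le_mul_of_nonneg_right hρz (norm_nonneg _))

variable [NormedSpace ℝ E] [NormedSpace ℝ F]

theorem isLittleO_clm_apply_of_tendsto_zero {A : α → E →L[ℝ] F} (hA : Tendsto A l (𝓝 0))
    (v : α → E) : (fun z => A z (v z)) =o[l] v :=
  isLittleO_of_norm_le_mul (tendsto_zero_iff_norm_tendsto_zero.mp hA) <|
    .of_forall fun z => (A z).le_opNorm (v z)

theorem tendsto_of_mul_eq_of_tendsto_one {R : Type*} [NormedRing R] [HasSummableGeomSeries R]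
    {a b : α → R} {h : R} (hab : ∀ᶠ z in l, a z * b z = h) (hb : Tendsto b l (𝓝 1)) :
    Tendsto a l (𝓝 h) := by
  have hinv : Tendsto (fun z => h * Ring.inverse (b z)) l (𝓝 h) := by
    simpa using ((NormedRing.inverse_continuousAt (1 : Rˣ)).tendsto.comp hb).const_mul h
  refine hinv.congr' ?_
  filter_upwards [hab, hb.eventually (Units.nhds (1 : Rˣ))] with z hz hunit
  rw [← hz, Ring.mul_inverse_cancel_right _ _ hunit]

/-- `max` enters because `closedBall x₀ (max ‖a - x₀‖ ‖b - x₀‖)` is a convex set containing `a`, `b`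
and `x₀`. -/
theorem norm_sub_sub_fderiv_le_of_norm_iteratedFDeriv_two_le {f : E → F} {x₀ a b : E} {δ K : ℝ}
    (hf : ∀ x ∈ Metric.ball x₀ δ, ContDiffAt ℝ 2 f x)
    (hK : ∀ x ∈ Metric.ball x₀ δ, ‖iteratedFDeriv ℝ 2 f x‖ ≤ K)
    (ha : a ∈ Metric.ball x₀ δ) (hb : b ∈ Metric.ball x₀ δ) :
    ‖f a - f b - fderiv ℝ f x₀ (a - b)‖ ≤ K * max ‖a - x₀‖ ‖b - x₀‖ * ‖a - b‖ := by
  set r := max ‖a - x₀‖ ‖b - x₀‖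
  have hr : 0 ≤ r := (norm_nonneg _).trans (le_max_left _ _)
  have hsub : Metric.closedBall x₀ r ⊆ Metric.ball x₀ δ :=
    Metric.closedBall_subset_ball (max_lt (mem_ball_iff_norm.mp ha) (mem_ball_iff_norm.mp hb))
  have hconv : Convex ℝ (Metric.closedBall x₀ r) := convex_closedBall x₀ r
  have hx₀ : x₀ ∈ Metric.closedBall x₀ r := Metric.mem_closedBall_self hr
  have hK₀ : 0 ≤ K := (norm_nonneg _).trans (hK x₀ (hsub hx₀))
  have hfderiv : ∀ x ∈ Metric.closedBall x₀ r, ‖fderiv ℝ f x - fderiv ℝ f x₀‖ ≤ K * r := by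
    intro x hx
    calc ‖fderiv ℝ f x - fderiv ℝ f x₀‖ ≤ K * ‖x - x₀‖ :=
          hconv.norm_image_sub_le_of_norm_fderiv_le (𝕜 := ℝ)
            (fun y hy => ((hf y (hsub hy)).fderiv_right (m := 1) (by norm_num)).differentiableAt
              (by norm_num))
            (fun y hy => by
              rw [← norm_iteratedFDeriv_one, norm_iteratedFDeriv_fderiv]
              exact hK y (hsub hy))
            hx₀ hx
      _ ≤ K * r := by
          gcongr
          exact mem_closedBall_iff_norm.mp hx
  exact hconv.norm_image_sub_le_of_norm_fderiv_le' (𝕜 := ℝ)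
    (fun x hx => (hf x (hsub hx)).differentiableAt (by norm_num)) hfderiv
    (mem_closedBall_iff_norm.mpr (le_max_right _ _))
    (mem_closedBall_iff_norm.mpr (le_max_left _ _))

end NormedAnalysis

section Hilbert

variable {E : Type*} [NormedAddCommGroup E] [InnerProductSpace ℝ E]

theorem exists_pos_forall_mul_sq_le_inner [FiniteDimensional ℝ E] {A : E →L[ℝ] E}
    (hA : ∀ v ≠ 0, 0 < inner ℝ (A v) v) : ∃ c : ℝ, 0 < c ∧ ∀ v, c * ‖v‖ ^ 2 ≤ inner ℝ (A v) v := by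
  obtain ⟨c, hc, hsphere⟩ := (isCompact_sphere (0 : E) 1).exists_forall_le'
    (f := fun v => inner ℝ (A v) v) (by fun_prop)
    fun v hv => hA v (ne_zero_of_mem_unit_sphere ⟨v, hv⟩)
  refine ⟨c, hc, fun v => ?_⟩
  obtain rfl | hv := eq_or_ne v 0
  · simp
  have hunit : c ≤ inner ℝ (A (‖v‖⁻¹ • v)) (‖v‖⁻¹ • v) :=
    hsphere _ (by simpa using norm_smul_inv_norm (𝕜 := ℝ) hv)
  calc c * ‖v‖ ^ 2 ≤ inner ℝ (A (‖v‖⁻¹ • v)) (‖v‖⁻¹ • v) * ‖v‖ ^ 2 := by gcongr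
    _ = inner ℝ (A v) v := by
      rw [map_smul, real_inner_smul_left, real_inner_smul_right]
      field_simp [norm_ne_zero_iff.mpr hv]

theorem half_mul_norm_le_of_inner_apply_le {A B : E →L[ℝ] E} {c : ℝ}
    (hB : ∀ v, c * ‖v‖ ^ 2 ≤ inner ℝ (B v) v) (hAB : ‖A - B‖ ≤ c / 2) {Δ w : E}
    (h : inner ℝ (A Δ) Δ ≤ inner ℝ w Δ) : c / 2 * ‖Δ‖ ≤ ‖w‖ := by
  obtain rfl | hΔ := eq_or_ne Δ 0
  · simp
  refine le_of_mul_le_mul_right ?_ (norm_pos_iff.mpr hΔ)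
  have hpert : inner ℝ ((B - A) Δ) Δ ≤ c / 2 * ‖Δ‖ * ‖Δ‖ :=
    (real_inner_le_norm _ _).trans <| mul_le_mul_of_nonneg_right
      ((B - A).le_of_opNorm_le (norm_sub_rev A B ▸ hAB) Δ) (norm_nonneg Δ)
  calc c / 2 * ‖Δ‖ * ‖Δ‖ ≤ inner ℝ (B Δ) Δ - inner ℝ ((B - A) Δ) Δ := by linarith [hB Δ]
    _ = inner ℝ (A Δ) Δ := by rw [← inner_sub_left]; simp
    _ ≤ ‖w‖ * ‖Δ‖ := h.trans (real_inner_le_norm w Δ)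

theorem isLittleO_of_inner_apply_le {α : Type*} {l : Filter α} {A : α → E →L[ℝ] E}
    {B : E →L[ℝ] E} {c : ℝ} (hc : 0 < c) (hB : ∀ v, c * ‖v‖ ^ 2 ≤ inner ℝ (B v) v)
    (hA : Tendsto A l (𝓝 B)) {Δ v γ : α → E} (hγ : (fun z => γ z - B (v z)) =o[l] v)
    (h : ∀ᶠ z in l, inner ℝ (A z (Δ z)) (Δ z) ≤ inner ℝ (A z (v z) - γ z) (Δ z)) : Δ =o[l] v := by
  have hsub : Tendsto (fun z => A z - B) l (𝓝 0) := tendsto_sub_nhds_zero_iff.mpr hA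
  have hres : (fun z => A z (v z) - γ z) =o[l] v := by
    simpa using (isLittleO_clm_apply_of_tendsto_zero hsub v).sub hγ
  refine IsBigO.trans_isLittleO (.of_bound (c / 2)⁻¹ ?_) hres
  filter_upwards [h, (tendsto_zero_iff_norm_tendsto_zero.mp hsub).eventually_le_const (half_pos hc)]
    with z hz hAz
  exact (le_inv_mul_iff₀ (half_pos hc)).mpr (half_mul_norm_le_of_inner_apply_le hB hAz hz)

variable [CompleteSpace E]

theorem norm_iteratedFDeriv_gradient (f : E → ℝ) (n : ℕ) (x : E) :
    ‖iteratedFDeriv ℝ n (∇ f) x‖ = ‖iteratedFDeriv ℝ (n + 1) f x‖ := by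
  rw [← norm_iteratedFDeriv_fderiv, ← toDual_comp_gradient,
    LinearIsometryEquiv.norm_iteratedFDeriv_comp_left]

theorem contDiffAt_gradient {f : E → ℝ} {x : E} {m n : WithTop ℕ∞} (hf : ContDiffAt ℝ n f x)
    (hmn : m + 1 ≤ n) : ContDiffAt ℝ m (∇ f) x :=
  (toDual ℝ E).symm.contDiff.contDiffAt.comp x (hf.fderiv_right hmn)

theorem hasGradientAt_half_inner_apply_sub {A : E →L[ℝ] E} (hA : A.IsSymmetric) (x w : E) :
    HasGradientAt (fun w => inner ℝ (w - x) (A (w - x)) / 2) (A (w - x)) w := by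
  have hsub : HasFDerivAt (fun w => w - x) (.id ℝ E) w := (hasFDerivAt_id w).sub_const x
  rw [hasGradientAt_iff_hasFDerivAt]
  refine ((hsub.inner ℝ (A.hasFDerivAt.comp w hsub)).mul_const 2⁻¹).congr_fderiv ?_
  ext v
  have hsymm : inner ℝ (w - x) (A v) = inner ℝ (A (w - x)) v := (hA (w - x) v).symm
  have hcomm : inner ℝ v (A (w - x)) = inner ℝ (A (w - x)) v := real_inner_comm _ _
  change (2 : ℝ)⁻¹ * (inner ℝ (w - x) (A v) + inner ℝ v (A (w - x))) = inner ℝ (A (w - x)) v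
  rw [hsymm, hcomm]
  ring

theorem hasGradientAt_const_mul_sum {ι : Type*} {f : ι → E → ℝ} {f' : ι → E} {x : E}
    (s : Finset ι) (c : ℝ) (hf : ∀ i ∈ s, HasGradientAt (f i) (f' i) x) :
    HasGradientAt (fun x => c * ∑ i ∈ s, f i x) (c • ∑ i ∈ s, f' i) x := by
  rw [hasGradientAt_iff_hasFDerivAt, map_smul, map_sum]
  exact (HasFDerivAt.fun_sum fun i hi => (hf i hi).hasFDerivAt).const_mul c

end Hilbert

section Prox

variable {d : ℕ} {f : EuclideanSpace ℝ (Fin d) → EReal}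

theorem ne_top_of_isMinOn_add_coe {φ : EuclideanSpace ℝ (Fin d) → ℝ}
    {a x : EuclideanSpace ℝ (Fin d)}
    (hmin : IsMinOn (fun w => f w + (φ w : EReal)) Set.univ a) (hx : f x ≠ ⊤) : f a ≠ ⊤ := by
  intro ha
  have hle : f a + (φ a : EReal) ≤ f x + (φ x : EReal) := hmin (Set.mem_univ x)
  rw [ha, EReal.top_add_coe, top_le_iff] at hle
  exact EReal.add_ne_top hx (EReal.coe_ne_top _) hle

theorem ConvexFnE.le_add_inner_of_isMinOn (hf : ConvexFnE f) (hbot : ∀ x, f x ≠ ⊥)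
    {φ : EuclideanSpace ℝ (Fin d) → ℝ} {a γ : EuclideanSpace ℝ (Fin d)}
    (hφ : HasGradientAt φ γ a) (hmin : IsMinOn (fun w => f w + (φ w : EReal)) Set.univ a)
    (u : EuclideanSpace ℝ (Fin d)) : f a ≤ f u + (inner ℝ γ (u - a) : ℝ) := by
  obtain hu | hu := eq_or_ne (f u) ⊤
  · simp [hu]
  have hmin' : ∀ w, f a + (φ a : EReal) ≤ f w + (φ w : EReal) := fun w => hmin (Set.mem_univ w)
  have ha : f a ≠ ⊤ := ne_top_of_isMinOn_add_coe hmin hu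
  lift f u to ℝ using ⟨hu, hbot u⟩ with β hβ
  lift f a to ℝ using ⟨ha, hbot a⟩ with α hα
  have hslope : ∀ t ∈ Set.Ioc (0 : ℝ) 1, α - β ≤ t⁻¹ • (φ (a + t • (u - a)) - φ a) := by
    rintro t ⟨ht₀, ht₁⟩
    have hconv := hf a u (1 - t) t (by linarith) ht₀.le (by ring)
    rw [show (1 - t) • a + t • u = a + t • (u - a) by module, ← hα, ← hβ] at hconv
    have hle : (α + φ a : EReal) ≤ (1 - t : ℝ) * α + t * β + φ (a + t • (u - a)) :=
      (hmin' _).trans (by gcongr)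
    norm_cast at hle
    rw [smul_eq_mul, le_inv_mul_iff₀ ht₀]
    linarith
  have hderiv : HasDerivAt (fun t : ℝ => φ (a + t • (u - a))) (inner ℝ γ (u - a)) 0 :=
    hφ.hasFDerivAt.hasLineDerivAt (u - a)
  have hlim : α - β ≤ inner ℝ γ (u - a) := by
    refine ge_of_tendsto hderiv.tendsto_slope_zero_right ?_
    filter_upwards [Ioc_mem_nhdsGT one_pos] with t ht
    simpa using hslope t ht
  norm_cast
  linarith

theorem inner_sub_gradient_nonpos_of_isMinOn (hconv : ConvexFnE f) (hprop : ProperFn f)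
    {φ ψ : EuclideanSpace ℝ (Fin d) → ℝ} {a b γ η : EuclideanSpace ℝ (Fin d)}
    (hφ : HasGradientAt φ γ a) (ha : IsMinOn (fun w => f w + (φ w : EReal)) Set.univ a)
    (hψ : HasGradientAt ψ η b) (hb : IsMinOn (fun w => f w + (ψ w : EReal)) Set.univ b) :
    inner ℝ (η - γ) (b - a) ≤ 0 := by
  obtain ⟨⟨x, hx⟩, hbot⟩ := hprop
  have hab := hconv.le_add_inner_of_isMinOn hbot hφ ha b
  have hba := hconv.le_add_inner_of_isMinOn hbot hψ hb a
  lift f a to ℝ using ⟨ne_top_of_isMinOn_add_coe ha hx, hbot a⟩ with α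
  lift f b to ℝ using ⟨ne_top_of_isMinOn_add_coe hb hx, hbot b⟩ with β
  norm_cast at hab hba
  rw [← neg_sub b a, inner_neg_right] at hba
  rw [inner_sub_left]
  linarith

theorem isSymmetric_toCLM {C : Matrix (Fin d) (Fin d) ℝ} (hC : C.IsHermitian) :
    (toCLM C).IsSymmetric :=
  Matrix.isSymmetric_toEuclideanLin_iff.mpr hC

theorem inner_toCLM_apply_pos {H : Matrix (Fin d) (Fin d) ℝ} (hH : H.PosDef)
    {v : EuclideanSpace ℝ (Fin d)} (hv : v ≠ 0) : 0 < inner ℝ (toCLM H v) v := by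
  simpa [EuclideanSpace.inner_eq_star_dotProduct] using
    hH.dotProduct_mulVec_pos (x := v.ofLp) (by simpa using hv)

theorem inner_prox_sub_le {C : Matrix (Fin d) (Fin d) ℝ} (hconv : ConvexFnE f)
    (hprop : ProperFn f) (hC : C.IsHermitian) (hCunit : IsUnit C)
    {g : EuclideanSpace ℝ (Fin d) → ℝ} {a b w γ η : EuclideanSpace ℝ (Fin d)}
    (hg : HasGradientAt g γ a) (ha : IsMinOn (fun w => f w + (g w : EReal)) Set.univ a)
    (hw : w ∈ proxSet f C (b - mApp C⁻¹ η)) :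
    inner ℝ (toCLM C (w - a)) (w - a) ≤ inner ℝ (toCLM C (b - a) - (η - γ)) (w - a) := by
  have hcancel : toCLM C (mApp C⁻¹ η) = η := by
    have : toCLM C * toCLM C⁻¹ = 1 := by
      rw [← map_mul, Matrix.mul_nonsing_inv _ ((Matrix.isUnit_iff_isUnit_det _).mp hCunit), map_one]
    exact DFunLike.congr_fun this η
  have hmono := inner_sub_gradient_nonpos_of_isMinOn hconv hprop hg ha
    (hasGradientAt_half_inner_apply_sub (isSymmetric_toCLM hC) (b - mApp C⁻¹ η) w)
    (fun u _ => hw u)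
  have hsplit : toCLM C (w - (b - mApp C⁻¹ η)) - γ =
      toCLM C (w - a) - (toCLM C (b - a) - (η - γ)) := by
    simp only [map_sub, hcancel]
    abel
  rwa [hsplit, inner_sub_left, sub_nonpos] at hmono

end Prox

section Linearization

theorem norm_gradient_sub_sub_fderiv_le {E : Type*} [NormedAddCommGroup E] [InnerProductSpace ℝ E]
    [CompleteSpace E] {f : E → ℝ} {x₀ a b : E} {δ K : ℝ}
    (hf : ∀ x ∈ Metric.ball x₀ δ, ContDiffAt ℝ 3 f x)
    (hK : ∀ x ∈ Metric.ball x₀ δ, ‖iteratedFDeriv ℝ 3 f x‖ ≤ K)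
    (ha : a ∈ Metric.ball x₀ δ) (hb : b ∈ Metric.ball x₀ δ) :
    ‖∇ f a - ∇ f b - fderiv ℝ (∇ f) x₀ (a - b)‖ ≤ K * max ‖a - x₀‖ ‖b - x₀‖ * ‖a - b‖ :=
  norm_sub_sub_fderiv_le_of_norm_iteratedFDeriv_two_le
    (fun x hx => contDiffAt_gradient (hf x hx) (by norm_num))
    (fun x hx => (norm_iteratedFDeriv_gradient f 2 x).trans_le (hK x hx)) ha hb

theorem norm_sub_sub_apply_le_of_hasGradientAt {E : Type*} [NormedAddCommGroup E]
    [InnerProductSpace ℝ E] [CompleteSpace E] {f : E → ℝ} {f' : E → E} {f'' : E →L[ℝ] E}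
    {x₀ a b : E} {δ K : ℝ} (hf : ∀ x ∈ Metric.ball x₀ δ, ContDiffAt ℝ 3 f x)
    (hf' : ∀ x ∈ Metric.ball x₀ δ, HasGradientAt f (f' x) x) (hf'' : HasFDerivAt f' f'' x₀)
    (hK : ∀ x ∈ Metric.ball x₀ δ, ‖iteratedFDeriv ℝ 3 f x‖ ≤ K)
    (ha : a ∈ Metric.ball x₀ δ) (hb : b ∈ Metric.ball x₀ δ) :
    ‖f' a - f' b - f'' (a - b)‖ ≤ K * max ‖a - x₀‖ ‖b - x₀‖ * ‖a - b‖ := by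
  have hball : Metric.ball x₀ δ ∈ 𝓝 x₀ := Metric.ball_mem_nhds x₀ (Metric.pos_of_mem_ball ha)
  have heq : ∇ f =ᶠ[𝓝 x₀] f' := by
    filter_upwards [hball] with x hx using (hf' x hx).gradient
  rw [← (hf' a ha).gradient, ← (hf' b hb).gradient, ← (hf''.congr_of_eventuallyEq heq).fderiv]
  exact norm_gradient_sub_sub_fderiv_le hf hK ha hb

theorem isLittleO_sampleMean_sub_sub {α 𝒳 E F : Type*} {l : Filter α} [NormedAddCommGroup E]
    [NormedSpace ℝ E] [NormedAddCommGroup F] [NormedSpace ℝ F] {X : ℕ → α → 𝒳} {N : α → ℕ}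
    {D : E → 𝒳 → F} {A : 𝒳 → E →L[ℝ] F} {B : E →L[ℝ] F} {K : 𝒳 → ℝ} {k δ : ℝ} {x₀ : E}
    {a b : α → E} (hδ : 0 < δ)
    (hA : Tendsto (fun z => sampleMean (fun i => A (X i z)) (N z)) l (𝓝 B))
    (hK : Tendsto (fun z => sampleMean (fun i => K (X i z)) (N z)) l (𝓝 k))
    (hD : ∀ x, ∀ u ∈ Metric.ball x₀ δ, ∀ v ∈ Metric.ball x₀ δ,
      ‖D u x - D v x - A x (u - v)‖ ≤ K x * max ‖u - x₀‖ ‖v - x₀‖ * ‖u - v‖)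
    (ha : Tendsto a l (𝓝 x₀)) (hb : Tendsto b l (𝓝 x₀)) :
    (fun z => sampleMean (fun i => D (a z) (X i z)) (N z) -
      sampleMean (fun i => D (b z) (X i z)) (N z) - B (a z - b z)) =o[l] fun z => a z - b z := by
  have hmax : Tendsto (fun z => max ‖a z - x₀‖ ‖b z - x₀‖) l (𝓝 0) := by
    simpa using (tendsto_iff_norm_sub_tendsto_zero.mp ha).max
      (tendsto_iff_norm_sub_tendsto_zero.mp hb)
  have hrem : (fun z => sampleMean (fun i => D (a z) (X i z)) (N z) -
      sampleMean (fun i => D (b z) (X i z)) (N z) -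
      sampleMean (fun i => A (X i z)) (N z) (a z - b z)) =o[l] fun z => a z - b z := by
    refine isLittleO_of_norm_le_mul (by simpa using hK.mul hmax) ?_
    filter_upwards [ha (Metric.ball_mem_nhds x₀ hδ), hb (Metric.ball_mem_nhds x₀ hδ)]
      with z haz hbz
    rw [← sampleMean_clm_apply, ← sampleMean_sub, ← sampleMean_sub, ← sampleMean_mul_const,
      ← sampleMean_mul_const]
    exact norm_sampleMean_le (fun i => hD _ _ haz _ hbz) _
  have hdev := isLittleO_clm_apply_of_tendsto_zero (tendsto_sub_nhds_zero_iff.mpr hA)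
    fun z => a z - b z
  simpa using hrem.add hdev

variable {d : ℕ}

theorem hasFDerivAt_toCLM_of_hasGradientAt
    {D : EuclideanSpace ℝ (Fin d) → EuclideanSpace ℝ (Fin d)} {M : Matrix (Fin d) (Fin d) ℝ}
    {θ : EuclideanSpace ℝ (Fin d)}
    (h : ∀ i, HasGradientAt (fun θ => D θ i) (toEuc fun j => M i j) θ) :
    HasFDerivAt D (toCLM M) θ := by
  rw [← hasFDerivWithinAt_univ, hasFDerivWithinAt_euclidean]
  intro i
  refine (h i).hasFDerivAt.hasFDerivWithinAt.congr_fderiv ?_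
  ext v
  simp [toEuc, PiLp.inner_apply, Matrix.mulVec, dotProduct, mul_comm]

theorem tendsto_toCLM_of_tendsto_inv_mul {α : Type*} {l : Filter α}
    {C : α → Matrix (Fin d) (Fin d) ℝ} {H : Matrix (Fin d) (Fin d) ℝ}
    (hC : ∀ᶠ z in l, IsUnit (C z))
    (h : Tendsto (fun z => toCLM ((C z)⁻¹ * H - 1)) l (𝓝 0)) :
    Tendsto (fun z => toCLM (C z)) l (𝓝 (toCLM H)) := by
  refine tendsto_of_mul_eq_of_tendsto_one (b := fun z => toCLM ((C z)⁻¹ * H)) ?_ ?_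
  · filter_upwards [hC] with z hz
    rw [← map_mul,
      Matrix.mul_nonsing_inv_cancel_left _ _ ((Matrix.isUnit_iff_isUnit_det _).mp hz)]
  · simpa only [map_sub, map_one, tendsto_sub_nhds_zero_iff] using h

end Linearization

section OneStep

variable {d : ℕ} {𝒳 : Type*}

theorem isLittleO_sampleMean_gradient_sub {Ω : Type*} [MeasurableSpace 𝒳] [MeasurableSpace Ω]
    {ν : Measure 𝒳} {P : Measure Ω} [IsFiniteMeasure P] {X : ℕ → Ω → 𝒳}
    (hX : ∀ i, AEMeasurable (X i) P) (hindep : Pairwise fun i j => IndepFun (X i) (X j) P)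
    (hlaw : ∀ i, P.map (X i) = ν) {θ0 : EuclideanSpace ℝ (Fin d)} {δ : ℝ} (hδ : 0 < δ)
    {ℓ : EuclideanSpace ℝ (Fin d) → 𝒳 → ℝ}
    {dℓ : EuclideanSpace ℝ (Fin d) → 𝒳 → EuclideanSpace ℝ (Fin d)}
    {d2ℓ : 𝒳 → Matrix (Fin d) (Fin d) ℝ} {Hm : Matrix (Fin d) (Fin d) ℝ} {K : 𝒳 → ℝ}
    (hsmooth : ∀ x, ∀ θ ∈ Metric.ball θ0 δ, ContDiffAt ℝ 3 (fun θ => ℓ θ x) θ)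
    (hgrad : ∀ x, ∀ θ ∈ Metric.ball θ0 δ, HasGradientAt (fun θ => ℓ θ x) (dℓ θ x) θ)
    (hhess : ∀ x, HasFDerivAt (fun θ => dℓ θ x) (toCLM (d2ℓ x)) θ0)
    (hHmInt : ∀ i j, Integrable (fun x => d2ℓ x i j) ν)
    (hHm : ∀ i j, Hm i j = ∫ x, d2ℓ x i j ∂ν) (hKint : Integrable K ν)
    (hdom : ∀ x, ∀ θ ∈ Metric.ball θ0 δ, ‖iteratedFDeriv ℝ 3 (fun θ => ℓ θ x) θ‖ ≤ K x)
    {a b : ℕ × Ω → EuclideanSpace ℝ (Fin d)} (ha : Tendsto a (highProb P) (𝓝 θ0))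
    (hb : Tendsto b (highProb P) (𝓝 θ0)) :
    (fun z => sampleMean (fun i => dℓ (a z) (X i z.2)) z.1 -
      sampleMean (fun i => dℓ (b z) (X i z.2)) z.1 - toCLM Hm (a z - b z)) =o[highProb P]
      fun z => a z - b z := by
  obtain rfl : Hm = Matrix.of fun i j => ∫ x, d2ℓ x i j ∂ν := Matrix.ext hHm
  have htaylor : ∀ x, ∀ u ∈ Metric.ball θ0 δ, ∀ v ∈ Metric.ball θ0 δ,
      ‖dℓ u x - dℓ v x - toCLM (d2ℓ x) (u - v)‖ ≤ K x * max ‖u - θ0‖ ‖v - θ0‖ * ‖u - v‖ :=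
    fun x u hu v hv => norm_sub_sub_apply_le_of_hasGradientAt (f' := fun θ => dℓ θ x)
      (hsmooth x) (hgrad x) (hhess x) (hdom x) hu hv
  have hhess_mean := tendsto_sampleMean_toCLM_highProb hX hindep hlaw hHmInt
  have hK_mean := tendsto_sampleMean_highProb (φ := K) hX hindep hlaw hKint
  exact isLittleO_sampleMean_sub_sub (X := fun i z => X i z.2) (N := Prod.fst) (D := dℓ)
    (A := fun x => toCLM (d2ℓ x)) (K := K) hδ hhess_mean hK_mean htaylor ha hb

theorem inner_oneStep_sub_le {f : EuclideanSpace ℝ (Fin d) → EReal}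
    {C : Matrix (Fin d) (Fin d) ℝ} {ℓ : EuclideanSpace ℝ (Fin d) → 𝒳 → ℝ}
    {dℓ : EuclideanSpace ℝ (Fin d) → 𝒳 → EuclideanSpace ℝ (Fin d)} {x : ℕ → 𝒳} {n : ℕ}
    {a b w : EuclideanSpace ℝ (Fin d)} (hconv : ConvexFnE f) (hprop : ProperFn f) (hC : C.PosDef)
    (hgrad : ∀ i, HasGradientAt (fun θ => ℓ θ (x i)) (dℓ a (x i)) a)
    (hmin : IsMinOn (fun θ => ((-(n : ℝ)⁻¹ * ∑ i ∈ Finset.range n, ℓ θ (x i) : ℝ) : EReal) + f θ)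
      Set.univ a)
    (hw : w ∈ proxSet f C (b - mApp C⁻¹ ((-(n : ℝ)⁻¹) • ∑ i ∈ Finset.range n, dℓ b (x i)))) :
    inner ℝ (toCLM C (w - a)) (w - a) ≤ inner ℝ (toCLM C (b - a) -
      (sampleMean (fun i => dℓ a (x i)) n - sampleMean (fun i => dℓ b (x i)) n)) (w - a) := by
  simp only [add_comm _ (f _)] at hmin
  have hgrad_mean := hasGradientAt_const_mul_sum (Finset.range n) (-(n : ℝ)⁻¹) fun i _ => hgrad i
  convert inner_prox_sub_le hconv hprop hC.isHermitian hC.isUnit hgrad_mean hmin hw using 3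
  simp only [sampleMean, neg_smul]
  abel

theorem one_step_regularized_mle_general {Ω : Type*} [MeasurableSpace 𝒳] [MeasurableSpace Ω]
    {ν : Measure 𝒳} {P : Measure Ω} [IsFiniteMeasure P] {X : ℕ → Ω → 𝒳}
    (hX : ∀ i, AEMeasurable (X i) P) (hindep : Pairwise fun i j => IndepFun (X i) (X j) P)
    (hlaw : ∀ i, P.map (X i) = ν) {θ0 : EuclideanSpace ℝ (Fin d)} {δ : ℝ} (hδ : 0 < δ)
    {ℓ : EuclideanSpace ℝ (Fin d) → 𝒳 → ℝ}
    {dℓ : EuclideanSpace ℝ (Fin d) → 𝒳 → EuclideanSpace ℝ (Fin d)}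
    {d2ℓ : 𝒳 → Matrix (Fin d) (Fin d) ℝ} {Hm : Matrix (Fin d) (Fin d) ℝ} {K : 𝒳 → ℝ}
    (hsmooth : ∀ x, ∀ θ ∈ Metric.ball θ0 δ, ContDiffAt ℝ 3 (fun θ => ℓ θ x) θ)
    (hgrad : ∀ x, ∀ θ ∈ Metric.ball θ0 δ, HasGradientAt (fun θ => ℓ θ x) (dℓ θ x) θ)
    (hhess : ∀ x, HasFDerivAt (fun θ => dℓ θ x) (toCLM (d2ℓ x)) θ0)
    (hHmInt : ∀ i j, Integrable (fun x => d2ℓ x i j) ν)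
    (hHm : ∀ i j, Hm i j = ∫ x, d2ℓ x i j ∂ν) (hnegdef : (-Hm).PosDef)
    (hKint : Integrable K ν)
    (hdom : ∀ x, ∀ θ ∈ Metric.ball θ0 δ, ‖iteratedFDeriv ℝ 3 (fun θ => ℓ θ x) θ‖ ≤ K x)
    {h : ℕ → Ω → EuclideanSpace ℝ (Fin d) → EReal}
    (hh : ∀ n, ∀ᵐ ω ∂P, ConvexFnE (h n ω) ∧ ProperFn (h n ω))
    {C : ℕ → Ω → Matrix (Fin d) (Fin d) ℝ} (hC : ∀ n, ∀ᵐ ω ∂P, (C n ω).PosDef)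
    (hCn : TendstoInProb P (E := EuclideanSpace ℝ (Fin d) →L[ℝ] EuclideanSpace ℝ (Fin d))
      fun n ω => toCLM ((C n ω)⁻¹ * (-Hm) - 1))
    {θhat θinit θose : ℕ → Ω → EuclideanSpace ℝ (Fin d)}
    (hmin : ∀ n : ℕ, ∀ᵐ ω ∂P, IsMinOn (fun θ =>
      ((-(n : ℝ)⁻¹ * ∑ i ∈ Finset.range n, ℓ θ (X i ω) : ℝ) : EReal) + h n ω θ)
      Set.univ (θhat n ω))
    (hcons : TendstoInProb P fun n ω => θhat n ω - θ0)
    {a : ℕ → ℝ} (ha : Tendsto a atTop atTop)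
    (hinit : BoundedInProb P fun n ω => a n • (θinit n ω - θhat n ω))
    (hose : ∀ n, ∀ᵐ ω ∂P, θose n ω ∈ proxSet (h n ω) (C n ω) (θinit n ω -
      mApp (C n ω)⁻¹ ((-(n : ℝ)⁻¹) • ∑ i ∈ Finset.range n, dℓ (θinit n ω) (X i ω)))) :
    TendstoInProb P fun n ω => a n • (θose n ω - θhat n ω) := by
  have hhat : Tendsto (fun z => θhat z.1 z.2) (highProb P) (𝓝 θ0) :=
    tendsto_sub_nhds_zero_iff.mp hcons.tendsto_highProb
  have hinit_tendsto : Tendsto (fun z => θinit z.1 z.2) (highProb P) (𝓝 θ0) := by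
    simpa using (hinit.tendstoInProb_of_smul ha).tendsto_highProb.add hhat
  have hlin := isLittleO_sampleMean_gradient_sub hX hindep hlaw hδ hsmooth hgrad hhess hHmInt hHm
    hKint hdom hinit_tendsto hhat
  have hCpos : ∀ᶠ z in highProb P, (C z.1 z.2).PosDef :=
    eventually_highProb_of_ae (.of_forall hC)
  have hClim : Tendsto (fun z => toCLM (C z.1 z.2)) (highProb P) (𝓝 (toCLM (-Hm))) :=
    tendsto_toCLM_of_tendsto_inv_mul (hCpos.mono fun _ hz => hz.isUnit)
      hCn.tendsto_highProb
  obtain ⟨c, hc, hcoercive⟩ := exists_pos_forall_mul_sq_le_inner (A := toCLM (-Hm))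
    fun v hv => inner_toCLM_apply_pos hnegdef hv
  have hlin_neg : (fun z => sampleMean (fun i => dℓ (θhat z.1 z.2) (X i z.2)) z.1 -
      sampleMean (fun i => dℓ (θinit z.1 z.2) (X i z.2)) z.1 -
      toCLM (-Hm) (θinit z.1 z.2 - θhat z.1 z.2)) =o[highProb P]
      fun z => θinit z.1 z.2 - θhat z.1 z.2 := by
    refine hlin.neg_left.congr_left fun z => ?_
    rw [map_neg, neg_apply]
    abel
  have hlittle : (fun z => θose z.1 z.2 - θhat z.1 z.2) =o[highProb P]
      fun z => θinit z.1 z.2 - θhat z.1 z.2 := by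
    refine isLittleO_of_inner_apply_le hc hcoercive hClim hlin_neg ?_
    filter_upwards [hCpos, eventually_highProb_of_ae (.of_forall hh),
      eventually_highProb_of_ae (.of_forall hmin), eventually_highProb_of_ae (.of_forall hose),
      hhat (Metric.ball_mem_nhds θ0 hδ)] with z hCz hhz hminz hosez hball
    exact inner_oneStep_sub_le hhz.1 hhz.2 hCz (fun i => hgrad _ _ hball) hminz hosez
  exact hinit.tendstoInProb_of_isLittleO
    ((isBigO_refl (fun z => a z.1) _).smul_isLittleO hlittle)

end OneStep

open MeasureTheory Filter Topology ProbabilityTheory in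
/-- Proposition 2.3: for regularized maximum likelihood from an iid sample, under the stated
regularity conditions on the log-density and the scaling matrices, the one-step estimator given
by a single scaled proximal gradient step from any `√n`-consistent initial estimator is
asymptotically equivalent to the penalized maximum likelihood estimator `θ̂ₙ`. -/
theorem one_step_regularized_mle
    (d : ℕ) (hd : 1 ≤ d)
    {𝒳 : Type*} [MeasurableSpace 𝒳] (μ : MeasureTheory.Measure 𝒳) [SigmaFinite μ]
    (Θ : Set (EuclideanSpace ℝ (Fin d))) (hΘ : IsOpen Θ)
    (θstar θ0 : EuclideanSpace ℝ (Fin d)) (hθstar : θstar ∈ Θ) (hθ0 : θ0 ∈ Θ)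
    -- the parametric family of densities
    (p : EuclideanSpace ℝ (Fin d) → 𝒳 → ℝ)
    (hpos : ∀ θ x, 0 < p θ x)
    (hdens : ∀ θ ∈ Θ, ∫⁻ x, ENNReal.ofReal (p θ x) ∂μ = 1)
    -- ν is the distribution of each observation
    (ν : MeasureTheory.Measure 𝒳)
    (hν : ν = μ.withDensity fun x => ENNReal.ofReal (p θstar x))
    -- the iid sample
    {Ω : Type*} [MeasurableSpace Ω] (P : MeasureTheory.Measure Ω) [IsProbabilityMeasure P]
    (X : ℕ → Ω → 𝒳) (hXm : ∀ i, Measurable (X i))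
    (hiid : iIndepFun X P)
    (hdist : ∀ i, MeasureTheory.Measure.map (X i) P = ν)
    -- (i): θ ↦ log p_θ(x) is three times differentiable, with gradient dℓ and Hessian d2ℓ
    (dℓ : EuclideanSpace ℝ (Fin d) → 𝒳 → EuclideanSpace ℝ (Fin d))
    (d2ℓ : EuclideanSpace ℝ (Fin d) → 𝒳 → Matrix (Fin d) (Fin d) ℝ)
    (hsmooth : ∀ x, ContDiff ℝ 3 fun θ => Real.log (p θ x))
    (hgrad : ∀ x θ, HasGradientAt (fun θ => Real.log (p θ x)) (dℓ θ x) θ)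
    (hhess : ∀ x θ i, HasGradientAt (fun θ => dℓ θ x i) (toEuc fun j => d2ℓ θ x i j) θ)
    -- (ii): E[∇²log p_{θ₀}(X₁)] exists and is negative definite
    (Hm : Matrix (Fin d) (Fin d) ℝ)
    (hHmInt : ∀ i j, MeasureTheory.Integrable (fun x => d2ℓ θ0 x i j) ν)
    (hHm : ∀ i j, Hm i j = ∫ x, d2ℓ θ0 x i j ∂ν)
    (hnegdef : (-Hm).PosDef)
    -- (iii): the third-order partial derivatives of log p_θ are dominated by a fixed
    -- integrable function for θ in a neighborhood of θ₀
    (K : 𝒳 → ℝ) (hKint : MeasureTheory.Integrable K ν)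
    (hdom : ∃ δ : ℝ, 0 < δ ∧ ∀ θ : EuclideanSpace ℝ (Fin d), ‖θ - θ0‖ < δ → ∀ x,
      ‖iteratedFDeriv ℝ 3 (fun θ => Real.log (p θ x)) θ‖ ≤ K x)
    -- the penalty hₙ is proper and convex a.s., the scaling matrices positive definite a.s.
    (h : ℕ → Ω → EuclideanSpace ℝ (Fin d) → EReal)
    (hh : ∀ n, ∀ᵐ ω ∂P, ConvexFnE (h n ω) ∧ ProperFn (h n ω))
    (C : ℕ → Ω → Matrix (Fin d) (Fin d) ℝ)
    (hC : ∀ n, ∀ᵐ ω ∂P, (C n ω).PosDef)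
    -- (iv): −Cₙ⁻¹ E[∇²log p_{θ₀}(X₁)] → I in probability
    (hCn : ∀ ε : ℝ, 0 < ε →
      Tendsto (fun n => P {ω | ε ≤ matNorm ((C n ω)⁻¹ * (-Hm) - 1)}) atTop (𝓝 0))
    -- θ̂ₙ minimizes gₙ + hₙ a.s., where gₙ is the negative mean log-likelihood
    (θhat θinit θose : ℕ → Ω → EuclideanSpace ℝ (Fin d))
    (hmin : ∀ n : ℕ, ∀ᵐ ω ∂P, ∀ θ : EuclideanSpace ℝ (Fin d),
      (((-(n : ℝ)⁻¹ * ∑ i ∈ Finset.range n, Real.log (p (θhat n ω) (X i ω)) : ℝ) : EReal) +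
          h n ω (θhat n ω)) ≤
        ((-(n : ℝ)⁻¹ * ∑ i ∈ Finset.range n, Real.log (p θ (X i ω)) : ℝ) : EReal) + h n ω θ)
    -- θ̂ₙ is √n-consistent for θ₀
    (hcons : BoundedInProb P (fun n ω => Real.sqrt n • (θhat n ω - θ0)))
    -- θ̂_init is a √n-consistent estimator of θ̂ₙ
    (hinit : BoundedInProb P (fun n ω => Real.sqrt n • (θinit n ω - θhat n ω)))
    -- the one-step estimator: a single scaled proximal gradient step from θ̂_init
    (hose : ∀ n, ∀ᵐ ω ∂P,
      θose n ω ∈ proxSet (h n ω) (C n ω)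
        (θinit n ω -
          mApp (C n ω)⁻¹ ((-(n : ℝ)⁻¹) • ∑ i ∈ Finset.range n, dℓ (θinit n ω) (X i ω)))) :
    -- conclusion: asymptotic equivalence of θ̂_ose and θ̂ₙ
    TendstoInProb P (fun n ω => Real.sqrt n • (θose n ω - θhat n ω)) := by
  obtain ⟨δ, hδ, hdomδ⟩ := hdom
  have hsqrt : Tendsto (fun n : ℕ => Real.sqrt n) atTop atTop :=
    Real.tendsto_sqrt_atTop.comp tendsto_natCast_atTop_atTop
  exact one_step_regularized_mle_general (fun i => (hXm i).aemeasurable)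
    (fun i j hij => hiid.indepFun hij) hdist hδ (fun x _ _ => (hsmooth x).contDiffAt)
    (fun x θ _ => hgrad x θ) (fun x => hasFDerivAt_toCLM_of_hasGradientAt (hhess x θ0))
    hHmInt hHm hnegdef hKint (fun x θ hθ => hdomδ θ (mem_ball_iff_norm.mp hθ) x) hh hC hCn
    (fun n => (hmin n).mono fun ω hω θ _ => hω θ) (hcons.tendstoInProb_of_smul hsqrt) hsqrt
    hinit hose
end

section
/- Let f : ℝ^d → ℝ ∪ {∞} be proper and let C be a symmetric positive definite d×d matrix such that the set prox_f^C(x) is nonempty for every x (so the scaled Moreau envelope e_C f is real-valued). Fix x* ∈ ℝ^d and suppose there exists w* ∈ prox_f^C(x*) such that for every sequence u^ν → 0 there exist w^ν ∈ prox_f^C(x* + u^ν) with w^ν → w*. Then e_C f is (Fréchet) differentiable at x*, with gradient ∇e_C f(x*) = C(x* − w*). -/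
open MeasureTheory Filter Topology ProbabilityTheory

/-- The scaled Moreau envelope `e_C f(x) = inf_w { f(w) + (1/2)‖x − w‖_C² }`. -/
noncomputable def moreauEnv {d : ℕ} (C : Matrix (Fin d) (Fin d) ℝ)
    (f : EuclideanSpace ℝ (Fin d) → EReal) (x : EuclideanSpace ℝ (Fin d)) : EReal :=
  ⨅ w, f w + ((cnormSq C (x - w) / 2 : ℝ) : EReal)

/-!
If `w ∈ prox_f^C(x)`, then inserting `w` into the infimum defining `e_C f(y)` gives
`e_C f(y) ≤ e_C f(x) + ⟪C(x - w), y - x⟫ + ‖y - x‖_C² / 2`: the vector `C(x - w)` is a supergradient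
of `e_C f` at `x` up to a quadratic error. Supergradients at `x*` give an upper first-order estimate
of `e_C f` near `x*`; a supergradient at `y`, tested at `x*`, gives a lower one. The two agree to
first order because the supergradients at `y` can be chosen to converge to `C(x* - w*)` as `y → x*`.
-/

section InnerLimit

variable {α β γ : Type*} [TopologicalSpace β] {S : α → Set β} {b : β}

/-- `b` lies in the inner limit (in the sense of Painlevé and Kuratowski) of the set-valued map `S`
along `l`: every neighbourhood of `b` eventually meets `S x`. For `l = 𝓝 a` the point `a` itself is
included, so that `b` is in the closure of `S a`. -/
def MemInnerLimit (S : α → Set β) (l : Filter α) (b : β) : Prop :=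
  ∀ t ∈ 𝓝 b, ∀ᶠ x in l, (S x ∩ t).Nonempty

theorem memInnerLimit_of_seq {l : Filter α} [l.IsCountablyGenerated]
    (h : ∀ x : ℕ → α, Tendsto x atTop l →
      ∃ w : ℕ → β, (∀ n, w n ∈ S (x n)) ∧ Tendsto w atTop (𝓝 b)) :
    MemInnerLimit S l b := by
  intro t ht
  refine eventually_iff_seq_eventually.mpr fun x hx => ?_
  obtain ⟨w, hwS, hwb⟩ := h x hx
  filter_upwards [hwb.eventually_mem ht] with n hn
  exact ⟨w n, hwS n, hn⟩

theorem MemInnerLimit.eventually_nonempty {l : Filter α} (h : MemInnerLimit S l b) :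
    ∀ᶠ x in l, (S x).Nonempty :=
  (h Set.univ univ_mem).mono fun _ => Set.Nonempty.left

theorem MemInnerLimit.map [TopologicalSpace α] [TopologicalSpace γ] {T : α → Set γ} {a : α}
    {φ : α → β → γ} (h : MemInnerLimit S (𝓝 a) b) (hφ : ContinuousAt (Function.uncurry φ) (a, b))
    (hST : ∀ x, Set.MapsTo (φ x) (S x) (T x)) : MemInnerLimit T (𝓝 a) (φ a b) := by
  intro t ht
  obtain ⟨U, hU, V, hV, hUV⟩ := mem_nhds_prod_iff.mp (hφ ht)
  filter_upwards [hU, h V hV] with x hxU ⟨w, hwS, hwV⟩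
  exact ⟨φ x w, hST x hwS, hUV (Set.mk_mem_prod hxU hwV)⟩

end InnerLimit

section QuadraticSuperdifferential

variable {E : Type*} [NormedAddCommGroup E] [InnerProductSpace ℝ E]
  {K : ℝ} {e : E → ℝ} {s : Set E} {x y g : E}

/-- The supergradients at `x`, up to a quadratic error with constant `K`, of the restriction of `e`
to `s` (the proximal superdifferential of variational analysis, with a uniform constant). The point
`x` is not required to lie in `s`. -/
def quadraticSuperdifferentialOn (K : ℝ) (e : E → ℝ) (s : Set E) (x : E) : Set E :=
  {g | ∀ y ∈ s, e y ≤ e x + inner ℝ g (y - x) + K * ‖y - x‖ ^ 2}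

theorem sub_sub_inner_le_of_mem_quadraticSuperdifferentialOn
    (hg : g ∈ quadraticSuperdifferentialOn K e s x) (hy : y ∈ s) (g₀ : E) :
    e y - e x - inner ℝ g₀ (y - x) ≤ (‖g - g₀‖ + K * ‖y - x‖) * ‖y - x‖ := by
  calc e y - e x - inner ℝ g₀ (y - x)
      ≤ inner ℝ (g - g₀) (y - x) + K * ‖y - x‖ ^ 2 := by
        rw [inner_sub_left]
        linarith [hg y hy]
    _ ≤ ‖g - g₀‖ * ‖y - x‖ + K * ‖y - x‖ ^ 2 := by
        gcongr
        exact real_inner_le_norm _ _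
    _ = (‖g - g₀‖ + K * ‖y - x‖) * ‖y - x‖ := by ring

theorem hasGradientAt_of_memInnerLimit_quadraticSuperdifferentialOn [CompleteSpace E] {x₀ g₀ : E}
    (hs : s ∈ 𝓝 x₀) (h : MemInnerLimit (quadraticSuperdifferentialOn K e s) (𝓝 x₀) g₀) :
    HasGradientAt e g₀ x₀ := by
  rw [hasGradientAt_iff_isLittleO, Asymptotics.isLittleO_iff]
  intro c hc
  have close_supergradient : ∀ᶠ y in 𝓝 x₀,
      (quadraticSuperdifferentialOn K e s y ∩ Metric.ball g₀ (c / 2)).Nonempty :=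
    h _ (Metric.ball_mem_nhds g₀ (half_pos hc))
  have small_error : ∀ᶠ y in 𝓝 x₀, K * ‖y - x₀‖ < c / 2 := by
    have : ContinuousAt (fun y => K * ‖y - x₀‖) x₀ := by fun_prop
    exact this.eventually_lt_const (by simpa using half_pos hc)
  obtain ⟨g₁, hg₁, hg₁_close⟩ := close_supergradient.self_of_nhds
  filter_upwards [hs, close_supergradient, small_error] with y hy ⟨g, hg, hg_close⟩ hKy
  rw [mem_ball_iff_norm] at hg₁_close hg_close
  have upper : e y - e x₀ - inner ℝ g₀ (y - x₀) ≤ c * ‖y - x₀‖ :=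
    (sub_sub_inner_le_of_mem_quadraticSuperdifferentialOn hg₁ hy g₀).trans <| by
      gcongr
      linarith
  have lower : e x₀ - e y - inner ℝ g₀ (x₀ - y) ≤ c * ‖y - x₀‖ :=
    (sub_sub_inner_le_of_mem_quadraticSuperdifferentialOn hg (mem_of_mem_nhds hs) g₀).trans <| by
      rw [norm_sub_rev x₀ y]
      gcongr
      linarith
  rw [← neg_sub y x₀, inner_neg_right] at lower
  rw [Real.norm_eq_abs, abs_le]
  constructor <;> linarith

end QuadraticSuperdifferential

section MoreauEnvelope

variable {d : ℕ} {f : EuclideanSpace ℝ (Fin d) → EReal} {C : Matrix (Fin d) (Fin d) ℝ}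
  {x y w : EuclideanSpace ℝ (Fin d)}

theorem continuous_mApp (C : Matrix (Fin d) (Fin d) ℝ) : Continuous (mApp C) :=
  (Matrix.toEuclideanLin C).continuous_of_finiteDimensional

theorem cnormSq_sub_comm (C : Matrix (Fin d) (Fin d) ℝ) (v u : EuclideanSpace ℝ (Fin d)) :
    cnormSq C (v - u) = cnormSq C (u - v) := by
  simp only [cnormSq, mApp, ← neg_sub u v, map_neg, inner_neg_neg]

theorem cnormSq_add (hC : C.IsHermitian) (v u : EuclideanSpace ℝ (Fin d)) :
    cnormSq C (v + u) = cnormSq C v + 2 * inner ℝ (mApp C v) u + cnormSq C u := by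
  have symm : inner ℝ (mApp C v) u = inner ℝ v (mApp C u) :=
    Matrix.isSymmetric_toEuclideanLin_iff.mpr hC v u
  have mApp_add : mApp C (v + u) = mApp C v + mApp C u := map_add (Matrix.toEuclideanLin C) v u
  simp only [cnormSq, mApp_add, inner_add_left, inner_add_right, ← symm,
    real_inner_comm (mApp C v) u]
  ring

theorem cnormSq_le_matNorm_mul_norm_sq (C : Matrix (Fin d) (Fin d) ℝ)
    (v : EuclideanSpace ℝ (Fin d)) : cnormSq C v ≤ matNorm C * ‖v‖ ^ 2 :=
  calc cnormSq C v ≤ ‖v‖ * ‖mApp C v‖ := real_inner_le_norm _ _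
    _ ≤ ‖v‖ * (matNorm C * ‖v‖) := by
        gcongr
        exact (Matrix.toEuclideanCLM (𝕜 := ℝ) C).le_opNorm v
    _ = matNorm C * ‖v‖ ^ 2 := by ring

theorem ProperFn.ne_top_of_mem_proxSet (hf : ProperFn f) (hw : w ∈ proxSet f C x) : f w ≠ ⊤ := by
  obtain ⟨u, hu⟩ := hf.1
  intro hfw
  have := hw u
  rw [hfw, EReal.top_add_coe, top_le_iff] at this
  exact EReal.add_ne_top hu (EReal.coe_ne_top _) this

theorem moreauEnv_eq_of_mem_proxSet (hw : w ∈ proxSet f C x) :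
    moreauEnv C f x = f w + ((cnormSq C (x - w) / 2 : ℝ) : EReal) :=
  le_antisymm (iInf_le _ w) <| le_iInf fun u => by
    simpa only [cnormSq_sub_comm C _ x] using hw u

theorem ProperFn.coe_toReal_moreauEnv (hf : ProperFn f) (hx : (proxSet f C x).Nonempty) :
    ((moreauEnv C f x).toReal : EReal) = moreauEnv C f x := by
  obtain ⟨w, hw⟩ := hx
  rw [moreauEnv_eq_of_mem_proxSet hw]
  exact EReal.coe_toReal (EReal.add_ne_top (hf.ne_top_of_mem_proxSet hw) (EReal.coe_ne_top _))
    (EReal.add_ne_bot_iff.mpr ⟨hf.2 w, EReal.coe_ne_bot _⟩)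

theorem ProperFn.toReal_moreauEnv_of_mem_proxSet (hf : ProperFn f) (hw : w ∈ proxSet f C x) :
    (moreauEnv C f x).toReal = (f w).toReal + cnormSq C (x - w) / 2 := by
  rw [moreauEnv_eq_of_mem_proxSet hw, EReal.toReal_add (hf.ne_top_of_mem_proxSet hw) (hf.2 w)
    (EReal.coe_ne_top _) (EReal.coe_ne_bot _), EReal.toReal_coe]

theorem ProperFn.toReal_moreauEnv_le (hf : ProperFn f) (hy : (proxSet f C y).Nonempty)
    (hw : f w ≠ ⊤) : (moreauEnv C f y).toReal ≤ (f w).toReal + cnormSq C (y - w) / 2 := by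
  rw [← EReal.coe_le_coe_iff, hf.coe_toReal_moreauEnv hy, EReal.coe_add,
    EReal.coe_toReal hw (hf.2 w)]
  exact iInf_le _ w

theorem ProperFn.mApp_sub_mem_quadraticSuperdifferentialOn (hf : ProperFn f) (hC : C.IsHermitian)
    (hw : w ∈ proxSet f C x) :
    mApp C (x - w) ∈ quadraticSuperdifferentialOn (matNorm C / 2)
      (fun y => (moreauEnv C f y).toReal) {y | (proxSet f C y).Nonempty} x := by
  intro y hy
  calc (moreauEnv C f y).toReal
      ≤ (f w).toReal + cnormSq C (y - w) / 2 :=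
        hf.toReal_moreauEnv_le hy (hf.ne_top_of_mem_proxSet hw)
    _ = (moreauEnv C f x).toReal + inner ℝ (mApp C (x - w)) (y - x) + cnormSq C (y - x) / 2 := by
        rw [hf.toReal_moreauEnv_of_mem_proxSet hw, ← sub_add_sub_cancel' x w y, cnormSq_add hC]
        ring
    _ ≤ (moreauEnv C f x).toReal + inner ℝ (mApp C (x - w)) (y - x)
          + matNorm C / 2 * ‖y - x‖ ^ 2 := by
        linarith [cnormSq_le_matNorm_mul_norm_sq C (y - x)]

theorem moreau_envelope_differentiable_general (hf : ProperFn f) (hC : C.IsHermitian)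
    (hw : MemInnerLimit (proxSet f C) (𝓝 x) w) :
    HasGradientAt (fun y => (moreauEnv C f y).toReal) (mApp C (x - w)) x := by
  have hφ : Continuous (Function.uncurry fun y v => mApp C (y - v)) :=
    (continuous_mApp C).comp continuous_sub
  exact hasGradientAt_of_memInnerLimit_quadraticSuperdifferentialOn hw.eventually_nonempty <|
    hw.map hφ.continuousAt fun _ _ hv => hf.mApp_sub_mem_quadraticSuperdifferentialOn hC hv

end MoreauEnvelope

/-- Proposition 4.1 (differentiability of the scaled Moreau envelope): if the proximal map is
inner continuous at `x*` relative to some `w* ∈ prox_f^C(x*)`, then the (real-valued) scaled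
Moreau envelope is differentiable at `x*` with gradient `C(x* − w*)`. -/
theorem moreau_envelope_differentiable
    (d : ℕ) (f : EuclideanSpace ℝ (Fin d) → EReal) (hproper : ProperFn f)
    (C : Matrix (Fin d) (Fin d) ℝ) (hC : C.PosDef)
    (hne : ∀ x, (proxSet f C x).Nonempty)
    (xstar wstar : EuclideanSpace ℝ (Fin d))
    (hw : wstar ∈ proxSet f C xstar)
    (hinner : ∀ u : ℕ → EuclideanSpace ℝ (Fin d), Filter.Tendsto u Filter.atTop (nhds 0) →
      ∃ w : ℕ → EuclideanSpace ℝ (Fin d),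
        (∀ ν, w ν ∈ proxSet f C (xstar + u ν)) ∧ Filter.Tendsto w Filter.atTop (nhds wstar)) :
    HasGradientAt (fun x => (moreauEnv C f x).toReal) (mApp C (xstar - wstar)) xstar := by
  refine moreau_envelope_differentiable_general hproper hC.isHermitian
    (memInnerLimit_of_seq fun x hx => ?_)
  simpa only [add_sub_cancel] using hinner (fun ν => x ν - xstar) (tendsto_sub_nhds_zero_iff.mpr hx)
end

section
/- Let μ ∈ ℝ, σ > 0, α > 0, and n ≥ 1. Let U be uniform on [0,1] and Z standard normal, independent of each other. Define θ_init = μ − U/√n, X̄ = μ + σZ/√n, and the one-step gradient descent estimate θ̂ = θ_init − α σ⁻² (θ_init − X̄). Then P(θ̂ > μ) = P( Z > (σ/α − σ⁻¹)·U ); in particular this probability does not depend on n. Consequently, if σ/α − σ⁻¹ = M for a fixed large M, then P(θ̂ > μ) = 1 − Φ(M) + (1 − exp(−M²/2))/(M√(2π)), which can be made arbitrarily small independently of n, so the one-step gradient descent estimator is not asymptotically equivalent to the sample mean, for which P(X̄ > μ) = 1/2. -/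
open MeasureTheory ProbabilityTheory

/-!
Writing `r = √n`, one gets `θ̂ - μ = α / (σ r) * (Z - (σ / α - σ⁻¹) U)`, so that the event
`θ̂ > μ` is `Z > M U` with `M = σ / α - σ⁻¹`, whatever `r` is. Conditioning on `U` turns its
probability into `∫₀¹ (1 - Φ(M u)) du`, and this is explicit because `x Φ(x) + φ(x)` is an
antiderivative of `Φ`. The sample mean is Gaussian with mean `μ`, which is therefore its median.
-/

open scoped NNReal

lemma hasDerivAt_setIntegral_Iic {E : Type*} [NormedAddCommGroup E] [NormedSpace ℝ E]
    [CompleteSpace E] {f : ℝ → E} {x : ℝ} (hf : Integrable f) (hfx : ContinuousAt f x) :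
    HasDerivAt (fun y ↦ ∫ t in Set.Iic y, f t) (f x) x := by
  have split_at_zero (y : ℝ) :
      ∫ t in Set.Iic y, f t = (∫ t in Set.Iic 0, f t) + ∫ t in (0 : ℝ)..y, f t := by
    rw [← intervalIntegral.integral_Iic_sub_Iic hf.integrableOn hf.integrableOn,
      add_sub_cancel]
  rw [funext split_at_zero]
  exact (intervalIntegral.integral_hasDerivAt_right hf.intervalIntegrable
    hf.aestronglyMeasurable.stronglyMeasurableAtFilter hfx).const_add _

section GaussianCDF

variable {m : ℝ} {v : ℝ≥0}

lemma hasDerivAt_gaussianPDFReal (m : ℝ) (v : ℝ≥0) (x : ℝ) :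
    HasDerivAt (gaussianPDFReal m v) (-((x - m) / v) * gaussianPDFReal m v x) x := by
  have exponent : HasDerivAt (fun y : ℝ ↦ -(y - m) ^ 2 / (2 * v)) (-((x - m) / v)) x := by
    refine ((((hasDerivAt_id' x).sub_const m).fun_pow 2).fun_neg.div_const _).congr_deriv ?_
    simp only [Nat.cast_ofNat, Nat.add_one_sub_one, pow_one, mul_one]
    rw [neg_div, mul_div_mul_left _ _ two_ne_zero]
  rw [gaussianPDFReal_def]
  exact (exponent.exp.const_mul _).congr_deriv (by ring)

lemma cdf_gaussianReal_eq_setIntegral (hv : v ≠ 0) (x : ℝ) :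
    cdf (gaussianReal m v) x = ∫ t in Set.Iic x, gaussianPDFReal m v t := by
  rw [cdf_eq_real, measureReal_def, gaussianReal_apply_eq_integral _ hv, ENNReal.toReal_ofReal]
  exact integral_nonneg (gaussianPDFReal_nonneg m v)

lemma hasDerivAt_cdf_gaussianReal (hv : v ≠ 0) (x : ℝ) :
    HasDerivAt (cdf (gaussianReal m v)) (gaussianPDFReal m v x) x := by
  rw [funext (cdf_gaussianReal_eq_setIntegral hv)]
  exact hasDerivAt_setIntegral_Iic (integrable_gaussianPDFReal m v)
    (hasDerivAt_gaussianPDFReal m v x).continuousAt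

lemma continuous_cdf_gaussianReal (hv : v ≠ 0) : Continuous (cdf (gaussianReal m v)) :=
  continuous_iff_continuousAt.2 fun x ↦ (hasDerivAt_cdf_gaussianReal hv x).continuousAt

lemma hasDerivAt_sub_mul_cdf_add_mul_gaussianPDFReal (hv : v ≠ 0) (x : ℝ) :
    HasDerivAt (fun y ↦ (y - m) * cdf (gaussianReal m v) y + v * gaussianPDFReal m v y)
      (cdf (gaussianReal m v) x) x := by
  have hv' : (v : ℝ) ≠ 0 := NNReal.coe_ne_zero.2 hv
  refine ((((hasDerivAt_id' x).sub_const m).fun_mul (hasDerivAt_cdf_gaussianReal hv x)).fun_add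
    ((hasDerivAt_gaussianPDFReal m v x).const_mul (v : ℝ))).congr_deriv ?_
  field_simp
  ring

lemma integral_cdf_gaussianReal (hv : v ≠ 0) (a b : ℝ) :
    ∫ x in a..b, cdf (gaussianReal m v) x =
      ((b - m) * cdf (gaussianReal m v) b + v * gaussianPDFReal m v b) -
        ((a - m) * cdf (gaussianReal m v) a + v * gaussianPDFReal m v a) :=
  intervalIntegral.integral_eq_sub_of_hasDerivAt
    (fun x _ ↦ hasDerivAt_sub_mul_cdf_add_mul_gaussianPDFReal hv x)
    ((continuous_cdf_gaussianReal hv).intervalIntegrable a b)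

lemma integral_one_sub_cdf_gaussianReal_mul {M : ℝ} (hM : M ≠ 0) :
    ∫ u in (0 : ℝ)..1, (1 - cdf (gaussianReal 0 1) (M * u)) =
      1 - cdf (gaussianReal 0 1) M + (1 - Real.exp (-M ^ 2 / 2)) / (M * √(2 * Real.pi)) := by
  have integrable_cdf_mul :
      IntervalIntegrable (fun u ↦ cdf (gaussianReal 0 1) (M * u)) volume 0 1 :=
    ((continuous_cdf_gaussianReal one_ne_zero).comp (continuous_const_mul M)).intervalIntegrable _ _
  have integral_cdf_mul : ∫ u in (0 : ℝ)..1, cdf (gaussianReal 0 1) (M * u) =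
      M⁻¹ * (M * cdf (gaussianReal 0 1) M + gaussianPDFReal 0 1 M - gaussianPDFReal 0 1 0) := by
    rw [intervalIntegral.integral_comp_mul_left _ hM, integral_cdf_gaussianReal one_ne_zero]
    simp
  rw [intervalIntegral.integral_sub intervalIntegrable_const integrable_cdf_mul, integral_cdf_mul]
  simp only [gaussianPDFReal, intervalIntegral.integral_const, NNReal.coe_one, sub_zero, mul_one,
    one_smul, ne_eq, OfNat.ofNat_ne_zero, not_false_eq_true, zero_pow, neg_zero, zero_div,
    Real.exp_zero]
  field_simp
  ring

end GaussianCDF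

lemma measureReal_Ioi_eq_half_of_reflection {ν : Measure ℝ} [IsProbabilityMeasure ν]
    [NullSingletonClass ν] {m : ℝ} (hν : MeasurePreserving (fun x ↦ 2 * m - x) ν ν) :
    ν.real (Set.Ioi m) = 1 / 2 := by
  have reflect : (fun x ↦ 2 * m - x) ⁻¹' Set.Ioi m = Set.Iio m := by
    ext x
    simp only [Set.mem_preimage, Set.mem_Ioi, Set.mem_Iio]
    constructor <;> intro h <;> linarith
  have upper_eq_lower : ν.real (Set.Ioi m) = ν.real (Set.Iic m) := by
    rw [← hν.measureReal_preimage measurableSet_Ioi.nullMeasurableSet, reflect,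
      measureReal_congr Iio_ae_eq_Iic]
  have total := probReal_add_probReal_compl (μ := ν) (measurableSet_Iic (a := m))
  rw [Set.compl_Iic] at total
  linarith

lemma gaussianReal_real_Ioi_mean (m : ℝ) {v : ℝ≥0} (hv : v ≠ 0) :
    (gaussianReal m v).real (Set.Ioi m) = 1 / 2 := by
  have := nullSingletonClass_gaussianReal (μ := m) hv
  refine measureReal_Ioi_eq_half_of_reflection ⟨by fun_prop, ?_⟩
  rw [gaussianReal_map_const_sub]
  congr 1
  ring

section Probability

variable {Ω : Type*} [MeasurableSpace Ω] {P : Measure Ω}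

lemma measureReal_comp_lt_eq_integral_one_sub_cdf {𝓧 : Type*} [MeasurableSpace 𝓧]
    {Z : Ω → ℝ} {U : Ω → 𝓧} {ν : Measure ℝ} [IsProbabilityMeasure ν] {ρ : Measure 𝓧} {g : 𝓧 → ℝ}
    (hZ : HasLaw Z ν P) (hU : HasLaw U ρ P) (hZU : IndepFun Z U P) (hg : Measurable g) :
    P.real {ω | g (U ω) < Z ω} = ∫ u, (1 - cdf ν (g u)) ∂ρ := by
  have := hZ.isProbabilityMeasure
  have := hU.isProbabilityMeasure_iff.1 this
  have measurableSet_region : MeasurableSet {p : ℝ × 𝓧 | g p.2 < p.1} :=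
    measurableSet_lt (hg.comp measurable_snd) measurable_fst
  have joint_law : HasLaw (fun ω ↦ (Z ω, U ω)) (ν.prod ρ) P :=
    ⟨hZ.aemeasurable.prodMk hU.aemeasurable, by
      rw [hZU.map_prod_eq_prod_map_map hZ.aemeasurable hU.aemeasurable, hZ.map_eq, hU.map_eq]⟩
  calc P.real {ω | g (U ω) < Z ω}
      = (ν.prod ρ).real {p | g p.2 < p.1} := joint_law.measureReal_eq measurableSet_region
    _ = ∫ u, ν.real (Set.Ioi (g u)) ∂ρ := by
      rw [measureReal_def, Measure.prod_apply_symm measurableSet_region, ← integral_toReal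
        (measurable_measure_prodMk_right measurableSet_region).aemeasurable (by simp)]
      rfl
    _ = ∫ u, (1 - cdf ν (g u)) ∂ρ := by
      simp only [← Set.compl_Iic, probReal_compl_eq_one_sub measurableSet_Iic, cdf_eq_real]

lemma measureReal_mul_uniform_lt_gaussian {Z U : Ω → ℝ} (hZ : HasLaw Z (gaussianReal 0 1) P)
    (hU : HasLaw U (volume.restrict (Set.Icc 0 1)) P) (hZU : IndepFun Z U P)
    {M : ℝ} (hM : M ≠ 0) :
    P.real {ω | M * U ω < Z ω} =
      1 - cdf (gaussianReal 0 1) M + (1 - Real.exp (-M ^ 2 / 2)) / (M * √(2 * Real.pi)) := by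
  rw [measureReal_comp_lt_eq_integral_one_sub_cdf hZ hU hZU (measurable_const_mul M),
    integral_Icc_eq_integral_Ioc, ← intervalIntegral.integral_of_le zero_le_one,
    integral_one_sub_cdf_gaussianReal_mul hM]

lemma measureReal_lt_add_mul_gaussian {Z : Ω → ℝ} (hZ : HasLaw Z (gaussianReal 0 1) P)
    (m : ℝ) {c : ℝ} (hc : c ≠ 0) : P.real {ω | m < m + c * Z ω} = 1 / 2 := by
  have law := gaussianReal_const_add (gaussianReal_const_mul hZ c) m
  rw [mul_zero, zero_add, mul_one] at law
  rw [law.measureReal_eq measurableSet_Ioi]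
  exact gaussianReal_real_Ioi_mean m (by simpa [← NNReal.coe_ne_zero] using hc)

end Probability

lemma lt_gradient_step_iff {σ α r : ℝ} (hσ : 0 < σ) (hα : 0 < α) (hr : 0 < r) (μ u z : ℝ) :
    μ < μ - u / r - α * σ⁻¹ ^ 2 * (μ - u / r - (μ + σ * z / r)) ↔ (σ / α - σ⁻¹) * u < z := by
  have step_sub_mean : μ - u / r - α * σ⁻¹ ^ 2 * (μ - u / r - (μ + σ * z / r)) - μ =
      α / (σ * r) * (z - (σ / α - σ⁻¹) * u) := by
    field_simp
    ring
  rw [← sub_pos, step_sub_mean, mul_pos_iff_of_pos_left (by positivity), sub_pos]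

theorem gradient_descent_one_step_not_equivalent_general
    {Ω : Type*} [MeasurableSpace Ω] {P : Measure Ω} {Z U : Ω → ℝ}
    (hZ : HasLaw Z (gaussianReal 0 1) P) (hU : HasLaw U (volume.restrict (Set.Icc 0 1)) P)
    (hindep : IndepFun Z U P) {μ σ α r : ℝ} (hσ : 0 < σ) (hα : 0 < α) (hr : 0 < r)
    {θinit Xbar θhat : Ω → ℝ}
    (hθinit : ∀ ω, θinit ω = μ - U ω / r)
    (hXbar : ∀ ω, Xbar ω = μ + σ * Z ω / r)
    (hθhat : ∀ ω, θhat ω = θinit ω - α * σ⁻¹ ^ 2 * (θinit ω - Xbar ω)) :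
    P {ω | μ < θhat ω} = P {ω | (σ / α - σ⁻¹) * U ω < Z ω} ∧
    (∀ M : ℝ, M ≠ 0 → σ / α - σ⁻¹ = M →
      P.real {ω | μ < θhat ω} =
        1 - (∫ t in Set.Iic M, gaussianPDFReal 0 1 t) +
          (1 - Real.exp (-M ^ 2 / 2)) / (M * √(2 * Real.pi))) ∧
    P.real {ω | μ < Xbar ω} = 1 / 2 := by
  have event_eq : {ω | μ < θhat ω} = {ω | (σ / α - σ⁻¹) * U ω < Z ω} := by
    simp only [hθhat, hθinit, hXbar, lt_gradient_step_iff hσ hα hr]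
  refine ⟨by rw [event_eq], fun M hM hMeq ↦ ?_, ?_⟩
  · rw [event_eq, hMeq, measureReal_mul_uniform_lt_gaussian hZ hU hindep hM,
      cdf_gaussianReal_eq_setIntegral one_ne_zero]
  · simpa only [hXbar, mul_div_right_comm] using
      measureReal_lt_add_mul_gaussian hZ μ (div_pos hσ hr).ne'

/-- The gradient-descent one-step estimator counterexample: with
`θ_init = μ − U/√n`, `X̄ = μ + σZ/√n` and `θ̂ = θ_init − ασ⁻²(θ_init − X̄)`, one has
`P(θ̂ > μ) = P(Z > (σ/α − σ⁻¹)U)` (independent of `n`); if `σ/α − σ⁻¹ = M` then this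
probability equals `1 − Φ(M) + (1 − exp(−M²/2))/(M√(2π))`, while `P(X̄ > μ) = 1/2`
for the MLE `X̄`. Hence the one-step gradient descent estimator is not asymptotically
equivalent to the sample mean. -/
theorem gradient_descent_one_step_not_equivalent
    {Ω : Type*} [MeasurableSpace Ω] (P : Measure Ω) [IsProbabilityMeasure P]
    (Z U : Ω → ℝ) (hZm : Measurable Z) (hUm : Measurable U)
    (hZ : Measure.map Z P = gaussianReal 0 1)
    (hU : Measure.map U P = volume.restrict (Set.Icc (0 : ℝ) 1))
    (hindep : IndepFun Z U P)
    (μ σ α : ℝ) (hσ : 0 < σ) (hα : 0 < α)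
    (n : ℕ) (hn : 1 ≤ n)
    (θinit Xbar θhat : Ω → ℝ)
    (hθinit : ∀ ω, θinit ω = μ - U ω / Real.sqrt n)
    (hXbar : ∀ ω, Xbar ω = μ + σ * Z ω / Real.sqrt n)
    (hθhat : ∀ ω, θhat ω = θinit ω - α * σ⁻¹ ^ 2 * (θinit ω - Xbar ω)) :
    P {ω | μ < θhat ω} = P {ω | (σ / α - σ⁻¹) * U ω < Z ω} ∧
    (∀ M : ℝ, 0 < M → σ / α - σ⁻¹ = M →
      (P {ω | μ < θhat ω}).toReal =
        1 - (∫ t in Set.Iic M, gaussianPDFReal 0 1 t) +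
          (1 - Real.exp (-M ^ 2 / 2)) / (M * Real.sqrt (2 * Real.pi))) ∧
    (P {ω | μ < Xbar ω}).toReal = 1 / 2 :=
  (gradient_descent_one_step_not_equivalent_general ⟨hZm.aemeasurable, hZ⟩ ⟨hUm.aemeasurable, hU⟩
    hindep hσ hα (Real.sqrt_pos.2 (Nat.cast_pos.2 hn)) hθinit hXbar hθhat).imp_right
    (And.imp_left fun step_prob M hM ↦ step_prob M hM.ne')
end

section
/- Let X_1, ..., X_n be iid with density p_{θ*}, and let g_n(θ) = −(1/n) Σ_{i=1}^n log p_θ(X_i). Fix θ₀ ∈ Θ ⊆ ℝ^d and assume θ ↦ log p_θ(x) is three times differentiable for every x and the third-order partial derivatives of log p_θ(x) are dominated by a fixed integrable function C(x) for every θ in a neighborhood of θ₀. Then for every constant B > 0, the uniform quadratic remainder bound holds: sup over θ with √n‖θ − θ₀‖ < B of ‖√n(∇g_n(θ) − ∇g_n(θ₀)) − √n ∇²g_n(θ₀)(θ − θ₀)‖ converges to 0 in probability as n → ∞. -/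
open MeasureTheory Filter Topology ProbabilityTheory

/-!
Averaging the dominated expansions bounds the remainder of the empirical gradient by
`Cₙ ‖θ - θ₀‖²`, where `Cₙ` is the sample mean of `C`. On `√n ‖θ - θ₀‖ < B` the rescaled remainder is
therefore at most `B² Cₙ / √n`, uniformly in `θ`. The means `Cₙ` are bounded in `L¹`, so this bound
tends to zero in `L¹`, hence in probability.
-/

theorem norm_smul_sum_sub_sub_linearMap_apply_le {𝕜 ι E F : Type*} [NormedField 𝕜]
    [AddCommGroup E] [Module 𝕜 E] [SeminormedAddCommGroup F] [NormedSpace 𝕜 F]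
    (s : Finset ι) (c : 𝕜) {f f₀ : ι → F} {A : ι → E →ₗ[𝕜] F} {v : E} {b : ι → ℝ}
    (h : ∀ i ∈ s, ‖f i - f₀ i - A i v‖ ≤ b i) :
    ‖c • ∑ i ∈ s, f i - c • ∑ i ∈ s, f₀ i - (c • ∑ i ∈ s, A i) v‖ ≤ ‖c‖ * ∑ i ∈ s, b i := by
  have hsum : c • ∑ i ∈ s, f i - c • ∑ i ∈ s, f₀ i - (c • ∑ i ∈ s, A i) v =
      c • ∑ i ∈ s, (f i - f₀ i - A i v) := by
    simp only [LinearMap.smul_apply, LinearMap.sum_apply, Finset.sum_sub_distrib, smul_sub]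
  rw [hsum, norm_smul]
  gcongr
  exact norm_sum_le_of_le s h

theorem div_sq_le_norm_inv_mul_of_le_mul_sq {r x y c B ε : ℝ} (hr : 0 < r) (hx : 0 ≤ x)
    (hxB : r * x < B) (hy : y ≤ c * x ^ 2) (hε : ε ≤ r * y) : ε / B ^ 2 ≤ ‖r⁻¹ * c‖ := by
  have hB : 0 < B := (mul_nonneg hr.le hx).trans_lt hxB
  rw [div_le_iff₀ (by positivity)]
  calc
    ε ≤ r * (c * x ^ 2) := hε.trans (by gcongr)
    _ = r⁻¹ * c * (r * x) ^ 2 := by field_simp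
    _ ≤ ‖r⁻¹ * c‖ * B ^ 2 := by
      gcongr
      exact Real.le_norm_self _

section ConvergenceInMeasure

variable {ι Ω : Type*} [MeasurableSpace Ω] {P : Measure Ω} {l : Filter ι}

theorem eLpNorm_inv_card_smul_sum_le {F : Type*} [NormedAddCommGroup F] [NormedSpace ℝ F]
    {p K : ENNReal} (hp : 1 ≤ p) {Y : ι → Ω → F} (s : Finset ι)
    (hY : ∀ i ∈ s, AEStronglyMeasurable (Y i) P) (hK : ∀ i ∈ s, eLpNorm (Y i) p P ≤ K) :
    eLpNorm ((s.card : ℝ)⁻¹ • ∑ i ∈ s, Y i) p P ≤ K := by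
  rcases s.eq_empty_or_nonempty with rfl | hs
  · simp
  have hcard : (s.card : ℝ) ≠ 0 := by simp [hs.ne_empty]
  calc
    eLpNorm ((s.card : ℝ)⁻¹ • ∑ i ∈ s, Y i) p P
        = ‖(s.card : ℝ)⁻¹‖ₑ * eLpNorm (∑ i ∈ s, Y i) p P := eLpNorm_const_smul ..
    _ ≤ ‖(s.card : ℝ)⁻¹‖ₑ * (s.card • K) := by
      gcongr
      exact (eLpNorm_sum_le hY hp).trans (Finset.sum_le_card_nsmul s _ K hK)
    _ = ‖(s.card : ℝ)⁻¹ * s.card‖ₑ * K := by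
      rw [nsmul_eq_mul, ← mul_assoc, enorm_mul, Real.enorm_natCast]
    _ = K := by rw [inv_mul_cancel₀ hcard, enorm_one, one_mul]

theorem tendstoInMeasure_smul_of_eLpNorm_le {F : Type*} [NormedAddCommGroup F] [NormedSpace ℝ F]
    {p K : ENNReal} (hp : p ≠ 0) (hK : K ≠ ⊤) {c : ι → ℝ} (hc : Tendsto c l (𝓝 0)) {Y : ι → Ω → F}
    (hY : ∀ i, AEStronglyMeasurable (Y i) P) (hYK : ∀ i, eLpNorm (Y i) p P ≤ K) :
    TendstoInMeasure P (fun i => c i • Y i) l 0 := by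
  refine tendstoInMeasure_of_tendsto_eLpNorm hp (fun i => (hY i).const_smul (c i))
    aestronglyMeasurable_zero ?_
  have hcK : Tendsto (fun i => ‖c i‖ₑ * K) l (𝓝 0) := by
    simpa using ENNReal.Tendsto.mul_const hc.enorm (.inr hK)
  refine tendsto_of_tendsto_of_tendsto_of_le_of_le tendsto_const_nhds hcK
    (fun _ => zero_le) fun i => ?_
  calc
    eLpNorm (c i • Y i - 0) p P = ‖c i‖ₑ * eLpNorm (Y i) p P := by
      rw [sub_zero, eLpNorm_const_smul]
    _ ≤ ‖c i‖ₑ * K := by gcongr; exact hYK i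

theorem tendstoInMeasure_smul_sampleMean {𝒳 F : Type*} [MeasurableSpace 𝒳]
    [NormedAddCommGroup F] [NormedSpace ℝ F] {ν : Measure 𝒳} {X : ℕ → Ω → 𝒳}
    (hX : ∀ i, MeasurePreserving (X i) P ν) {C : 𝒳 → F} (hC : Integrable C ν)
    {c : ℕ → ℝ} (hc : Tendsto c atTop (𝓝 0)) :
    TendstoInMeasure P (fun n => c n • (n : ℝ)⁻¹ • ∑ i ∈ Finset.range n, C ∘ X i) atTop 0 := by
  have hCX (i : ℕ) : AEStronglyMeasurable (C ∘ X i) P :=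
    hC.aestronglyMeasurable.comp_measurePreserving (hX i)
  have hCXnorm (i : ℕ) : eLpNorm (C ∘ X i) 1 P = eLpNorm C 1 ν :=
    eLpNorm_comp_measurePreserving hC.aestronglyMeasurable (hX i)
  refine tendstoInMeasure_smul_of_eLpNorm_le one_ne_zero
    (memLp_one_iff_integrable.2 hC).eLpNorm_ne_top hc
    (fun n => (Finset.aestronglyMeasurable_sum _ fun i _ => hCX i).const_smul _) fun n => ?_
  simpa only [Finset.card_range] using eLpNorm_inv_card_smul_sum_le le_rfl (Finset.range n)
    (fun i _ => hCX i) fun i _ => (hCXnorm i).le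

theorem tendsto_measure_exists_le_mul_norm_of_norm_le_mul_sq {E F : Type*}
    [SeminormedAddCommGroup E] [SeminormedAddCommGroup F] {θ₀ : E} {r : ι → ℝ}
    (hr : Tendsto r l atTop) {C : ι → Ω → ℝ}
    (hC : TendstoInMeasure P (fun i => (r i)⁻¹ • C i) l 0) {R : ι → Ω → E → F}
    (hR : ∀ᶠ θ in 𝓝 θ₀, ∀ i ω, ‖R i ω θ‖ ≤ C i ω * ‖θ - θ₀‖ ^ 2)
    {B ε : ℝ} (hB : 0 < B) (hε : 0 < ε) :
    Tendsto (fun i => P {ω | ∃ θ, r i * ‖θ - θ₀‖ < B ∧ ε ≤ r i * ‖R i ω θ‖}) l (𝓝 0) := by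
  obtain ⟨δ, hδ, hRδ⟩ := Metric.eventually_nhds_iff.1 hR
  have hlarge := tendstoInMeasure_iff_norm.1 hC (ε / B ^ 2) (by positivity)
  refine tendsto_of_tendsto_of_tendsto_of_le_of_le' tendsto_const_nhds hlarge
    (.of_forall fun _ => zero_le) ?_
  filter_upwards [hr.eventually_gt_atTop 0, hr.eventually_gt_atTop (B / δ)] with i hri hriδ
  refine measure_mono ?_
  rintro ω ⟨θ, hθB, hθε⟩
  have hθδ : dist θ θ₀ < δ := by
    rw [dist_eq_norm]
    exact lt_of_mul_lt_mul_left (hθB.trans ((div_lt_iff₀ hδ).1 hriδ)) hri.le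
  simpa using div_sq_le_norm_inv_mul_of_le_mul_sq hri (norm_nonneg _) hθB (hRδ hθδ i ω) hθε

end ConvergenceInMeasure

/-- `ψ θ x` plays the role of the score `∇ log p_θ(x)`, and `A x` that of its derivative at `θ₀`. -/
theorem uniform_quadratic_remainder_loglikelihood_general
    {E F 𝒳 Ω : Type*} [SeminormedAddCommGroup E] [Module ℝ E]
    [SeminormedAddCommGroup F] [NormedSpace ℝ F] [MeasurableSpace 𝒳] [MeasurableSpace Ω]
    {P : Measure Ω} {ν : Measure 𝒳} {X : ℕ → Ω → 𝒳} (hX : ∀ i, MeasurePreserving (X i) P ν)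
    {ψ : E → 𝒳 → F} {A : 𝒳 → E →ₗ[ℝ] F} {θ₀ : E} {C : 𝒳 → ℝ} (hC : Integrable C ν)
    (hψ : ∀ᶠ θ in 𝓝 θ₀, ∀ x, ‖ψ θ x - ψ θ₀ x - A x (θ - θ₀)‖ ≤ C x * ‖θ - θ₀‖ ^ 2)
    {r : ℕ → ℝ} (hr : Tendsto r atTop atTop) {B ε : ℝ} (hB : 0 < B) (hε : 0 < ε) :
    Tendsto (fun n : ℕ => P {ω | ∃ θ : E, r n * ‖θ - θ₀‖ < B ∧
        ε ≤ r n * ‖(-(n : ℝ)⁻¹) • ∑ i ∈ Finset.range n, ψ θ (X i ω) -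
          (-(n : ℝ)⁻¹) • ∑ i ∈ Finset.range n, ψ θ₀ (X i ω) -
          ((-(n : ℝ)⁻¹) • ∑ i ∈ Finset.range n, A (X i ω)) (θ - θ₀)‖})
      atTop (𝓝 0) := by
  refine tendsto_measure_exists_le_mul_norm_of_norm_le_mul_sq hr
    (tendstoInMeasure_smul_sampleMean hX hC hr.inv_tendsto_atTop) ?_ hB hε
  filter_upwards [hψ] with θ hθ n ω
  refine (norm_smul_sum_sub_sub_linearMap_apply_le _ _ fun i _ => hθ (X i ω)).trans_eq ?_
  simp [Finset.sum_mul, mul_assoc]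

open MeasureTheory Filter Topology ProbabilityTheory in
/-- The uniform quadratic-remainder bound from the proof of Proposition 2.3: for an iid sample
with a log-density that is three times differentiable with dominated third-order remainder near
`θ₀`, the normalized gradient of the negative log-likelihood `gₙ` satisfies
`sup_{√n‖θ−θ₀‖<B} √n‖(∇gₙ(θ) − ∇gₙ(θ₀)) − ∇²gₙ(θ₀)(θ−θ₀)‖ → 0` in probability. -/
theorem uniform_quadratic_remainder_loglikelihood
    (d : ℕ) (hd : 1 ≤ d)
    {𝒳 : Type*} [MeasurableSpace 𝒳] (μ : MeasureTheory.Measure 𝒳) [SigmaFinite μ]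
    (Θ : Set (EuclideanSpace ℝ (Fin d))) (hΘ : IsOpen Θ)
    (θstar θ0 : EuclideanSpace ℝ (Fin d)) (hθstar : θstar ∈ Θ) (hθ0 : θ0 ∈ Θ)
    -- the parametric family of densities
    (p : EuclideanSpace ℝ (Fin d) → 𝒳 → ℝ)
    (hpos : ∀ x, 0 < p θstar x)
    (hdens : ∫⁻ x, ENNReal.ofReal (p θstar x) ∂μ = 1)
    -- ν is the distribution of each observation
    (ν : MeasureTheory.Measure 𝒳)
    (hν : ν = μ.withDensity fun x => ENNReal.ofReal (p θstar x))
    -- the iid sample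
    {Ω : Type*} [MeasurableSpace Ω] (P : MeasureTheory.Measure Ω) [IsProbabilityMeasure P]
    (X : ℕ → Ω → 𝒳) (hXm : ∀ i, Measurable (X i))
    (hiid : iIndepFun X P)
    (hdist : ∀ i, MeasureTheory.Measure.map (X i) P = ν)
    -- θ ↦ log p_θ(x) is three times differentiable, with gradient dℓ and Hessian d2ℓ
    (dℓ : EuclideanSpace ℝ (Fin d) → 𝒳 → EuclideanSpace ℝ (Fin d))
    (d2ℓ : EuclideanSpace ℝ (Fin d) → 𝒳 → Matrix (Fin d) (Fin d) ℝ)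
    (hsmooth : ∀ x, ContDiff ℝ 3 fun θ => Real.log (p θ x))
    (hgrad : ∀ x θ, HasGradientAt (fun θ => Real.log (p θ x)) (dℓ θ x) θ)
    (hhess : ∀ x θ i, HasGradientAt (fun θ => dℓ θ x i) (toEuc fun j => d2ℓ θ x i j) θ)
    -- domination of the third-order remainder near θ₀ by an integrable function
    (Cf : 𝒳 → ℝ) (hCint : MeasureTheory.Integrable Cf ν)
    (hdom : ∃ δ : ℝ, 0 < δ ∧ ∀ θ : EuclideanSpace ℝ (Fin d), ‖θ - θ0‖ < δ → ∀ x,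
      ‖dℓ θ x - dℓ θ0 x - mApp (d2ℓ θ0 x) (θ - θ0)‖ ≤ Cf x * ‖θ - θ0‖ ^ 2) :
    -- conclusion: the uniform quadratic remainder bound
    ∀ B : ℝ, 0 < B → ∀ ε : ℝ, 0 < ε →
      Tendsto (fun n : ℕ => P {ω | ∃ θ : EuclideanSpace ℝ (Fin d),
          Real.sqrt n * ‖θ - θ0‖ < B ∧
          ε ≤ Real.sqrt n *
            ‖((-(n : ℝ)⁻¹) • ∑ i ∈ Finset.range n, dℓ θ (X i ω) -
                (-(n : ℝ)⁻¹) • ∑ i ∈ Finset.range n, dℓ θ0 (X i ω)) -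
              mApp ((-(n : ℝ)⁻¹) • ∑ i ∈ Finset.range n, d2ℓ θ0 (X i ω)) (θ - θ0)‖})
        atTop (𝓝 0) := by
  intro B hB ε hε
  obtain ⟨δ, hδ, hdom⟩ := hdom
  simpa only [mApp, map_smul, map_sum, Function.comp_apply] using
    uniform_quadratic_remainder_loglikelihood_general (fun i => ⟨hXm i, hdist i⟩) hCint
      (A := fun x => Matrix.toEuclideanLin (d2ℓ θ0 x))
      (Metric.eventually_nhds_iff.2 ⟨δ, hδ, fun θ hθ => hdom θ (by rwa [← dist_eq_norm])⟩)
      (Real.tendsto_sqrt_atTop.comp tendsto_natCast_atTop_atTop) hB hε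
end
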